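/- arXiv:1908.04375 — 5 statements merged into one kernel-verified Lean document; each statement's English description precedes it below -/
import Mathlib

section
/- Let κ be a regular uncountable cardinal and λ ≥ κ. Suppose that PS^+(τ, κ, λ) holds. Then for any cardinal χ with κ ≤ χ < λ, PS^+(τ, κ, χ) holds. -/
/-!
Given partitions `Q x` of `P_κ(χ)`, assign to `a ∈ P_κ(λ)` the pullback of `Q (a ∩ χ)` along the
truncation `c ↦ c ∩ χ` (`IsPartitionOf.pullPkl`). `PS⁺(τ, κ, λ)` yields a cofinal `B` and a selector
`h`. The selected piece `h a` may vary among the `a ∈ B` with the same truncation, so for each `x`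
in `{a ∩ χ : a ∈ B}`, which is cofinal in `P_κ(χ)`, fix one `s x ∈ B` with `s x ∩ χ = x`, and
select for `x` the piece of `Q x` whose pullback is `h (s x)`, namely its image under truncation
(`image_pullPkl`). A witness `c ⊇ s x ∪ s y` truncates to a witness for `x` and `y`.
-/

set_option autoImplicit false

noncomputable section

open Cardinal Set

universe u

/-- `P_κ(λ)`: the collection of subsets of (the set of ordinals below) `λ`
of cardinality `< κ`. -/
def Pkl (κ lam : Cardinal.{0}) : Set (Set Ordinal.{0}) :=
  {a | a ⊆ Set.Iio lam.ord ∧ #a < Cardinal.lift.{1} κ}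

/-- `J` is an ideal on the set `X`. -/
structure IsIdealOn {α : Type u} (J : Set (Set α)) (X : Set α) : Prop where
  empty_mem : ∅ ∈ J
  subset_ground : ∀ A ∈ J, A ⊆ X
  union_mem : ∀ A ∈ J, ∀ B ∈ J, A ∪ B ∈ J
  mem_of_subset : ∀ A ∈ J, ∀ B, B ⊆ A → B ∈ J
  ground_not_mem : X ∉ J

/-- `J⁺`: the `J`-positive subsets of the ground set `X`. -/
def plusOf {α : Type u} (J : Set (Set α)) (X : Set α) : Set (Set α) :=
  {A | A ⊆ X ∧ A ∉ J}

/-- The restriction `J | A` of an ideal `J` with ground set `X`. -/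
def restr {α : Type u} (J : Set (Set α)) (X A : Set α) : Set (Set α) :=
  {B | B ⊆ X ∧ B ∩ A ∈ J}

/-- The ideal `I_{κ,λ}` of noncofinal subsets of `P_κ(λ)`. -/
def Ikl (κ lam : Cardinal.{0}) : Set (Set (Set Ordinal.{0})) :=
  {B | B ⊆ Pkl κ lam ∧ ∃ a ∈ Pkl κ lam, ∀ b ∈ B, ¬a ⊆ b}

/-- `Q` is a partition of `X`. -/
def IsPartitionOf {α : Type u} (Q : Set (Set α)) (X : Set α) : Prop :=
  (∀ A ∈ Q, A.Nonempty) ∧ (∀ A ∈ Q, A ⊆ X) ∧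
    (∀ A ∈ Q, ∀ B ∈ Q, A ≠ B → A ∩ B = ∅) ∧ ⋃₀ Q = X

/-- The piece selection principle `PS⁺(τ, κ, λ)`. -/
def PSPlus (τ κ lam : Cardinal.{0}) : Prop :=
  ∀ Q : Set Ordinal.{0} → Set (Set (Set Ordinal.{0})),
    (∀ a ∈ Pkl κ lam, IsPartitionOf (Q a) (Pkl κ lam) ∧ #(Q a) < Cardinal.lift.{1} τ) →
    ∃ B ∈ plusOf (Ikl κ lam) (Pkl κ lam), ∃ h : Set Ordinal.{0} → Set (Set Ordinal.{0}),
      (∀ a ∈ Pkl κ lam, h a ∈ Q a) ∧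
      ∀ a ∈ B, ∀ b ∈ B, ∃ c, c ∈ h a ∧ c ∈ h b ∧ a ∪ b ⊆ c

/-- The piece selection principle `PS⋆(τ, κ, λ)`. -/
def PSStar (τ κ lam : Cardinal.{0}) : Prop :=
  ∀ Q : Set Ordinal.{0} → Set (Set (Set Ordinal.{0})),
    (∀ a ∈ Pkl κ lam, IsPartitionOf (Q a) (Pkl κ lam) ∧ #(Q a) < Cardinal.lift.{1} τ) →
    ∃ B ∈ plusOf (Ikl κ lam) (Pkl κ lam), ∃ h : Set Ordinal.{0} → Set (Set Ordinal.{0}),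
      (∀ a ∈ Pkl κ lam, h a ∈ Q a) ∧
      ∀ a ∈ B, ∀ b ∈ B, ∃ t ∈ B, a ∪ b ⊆ t ∧
        (∃ c, c ∈ h a ∧ c ∈ h t ∧ t ⊆ c) ∧ ∃ d, d ∈ h b ∧ d ∈ h t ∧ t ⊆ d

/-- The piece selection principle `PS(τ, κ, λ)`. -/
def PSpr (τ κ lam : Cardinal.{0}) : Prop :=
  ∀ Q : Set Ordinal.{0} → Set (Set (Set Ordinal.{0})),
    (∀ a ∈ Pkl κ lam, IsPartitionOf (Q a) (Pkl κ lam) ∧ #(Q a) < Cardinal.lift.{1} τ) →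
    ∃ B ∈ plusOf (Ikl κ lam) (Pkl κ lam), ∃ h : Set Ordinal.{0} → Set (Set Ordinal.{0}),
      (∀ a ∈ Pkl κ lam, h a ∈ Q a) ∧
      ∀ a ∈ B, ∀ b ∈ B, ∃ t ∈ Pkl κ lam, a ∪ b ⊆ t ∧
        (∃ c, c ∈ h a ∧ c ∈ h t ∧ t ⊆ c) ∧ ∃ d, d ∈ h b ∧ d ∈ h t ∧ t ⊆ d

/-- The one-cardinal piece selection principle `PS⁺(τ, μ)`. -/
def PSPlusOne (τ μ : Cardinal.{0}) : Prop :=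
  ∀ Q : Ordinal.{0} → Set (Set Ordinal.{0}),
    (∀ β < μ.ord, IsPartitionOf (Q β) (Set.Ico β μ.ord) ∧ #(Q β) < Cardinal.lift.{1} τ) →
    ∃ B : Set Ordinal.{0}, B ⊆ Set.Iio μ.ord ∧ (∀ γ < μ.ord, ∃ β ∈ B, γ ≤ β) ∧
      ∃ h : Ordinal.{0} → Set Ordinal.{0}, (∀ β ∈ B, h β ∈ Q β) ∧
        ∀ α ∈ B, ∀ β ∈ B, (h α ∩ h β).Nonempty

/-- `X` is closed below `δ`: every ordinal `< δ` which is a limit of elements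
of `X` belongs to `X`. -/
def IsClosedBelow (X : Set Ordinal.{0}) (δ : Ordinal.{0}) : Prop :=
  ∀ β < δ, 0 < β → (∀ γ < β, ∃ ξ ∈ X, γ < ξ ∧ ξ < β) → β ∈ X

/-- `X` is a closed unbounded subset of `δ`. -/
def IsClubBelow (X : Set Ordinal.{0}) (δ : Ordinal.{0}) : Prop :=
  X ⊆ Set.Iio δ ∧ (∀ γ < δ, ∃ ξ ∈ X, γ ≤ ξ) ∧ IsClosedBelow X δ

/-- `δ` is a remarkably good point for the sequence `f` with respect to the
set of regular cardinals `A` and the ideal `I` on `A`. -/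
def RemGoodPoint (A : Set Cardinal.{0}) (I : Set (Set Cardinal.{0}))
    (f : Ordinal.{0} → Cardinal.{0} → Ordinal.{0}) (δ : Ordinal.{0}) : Prop :=
  ∃ X : Set Ordinal.{0}, IsClubBelow X δ ∧
    ∃ Z : Ordinal.{0} → Set Cardinal.{0}, (∀ ξ ∈ X, Z ξ ∈ I) ∧
      ∀ β ∈ X, ∀ ξ ∈ X, β < ξ → ∀ a ∈ A, a ∉ Z β → a ∉ Z ξ → f β a < f ξ a

/-- `sup (a ∩ κ)`. -/
def supk (κ : Cardinal.{0}) (a : Set Ordinal.{0}) : Ordinal.{0} :=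
  sSup (a ∩ Set.Iio κ.ord)

/-- Shelah's covering number `cov(ρ₁, ρ₂, ρ₃, ρ₄)`. -/
def covNum (ρ₁ ρ₂ ρ₃ ρ₄ : Cardinal.{0}) : Cardinal.{1} :=
  sInf {c : Cardinal.{1} | ∃ X : Set (Set Ordinal.{0}), c = #X ∧
    (∀ y ∈ X, y ⊆ Set.Iio ρ₁.ord ∧ #y < Cardinal.lift.{1} ρ₂) ∧
    ∀ a : Set Ordinal.{0}, a ⊆ Set.Iio ρ₁.ord → #a < Cardinal.lift.{1} ρ₃ →
      ∃ Q, Q ⊆ X ∧ #Q < Cardinal.lift.{1} ρ₄ ∧ a ⊆ ⋃₀ Q}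

/-- `κ` is mildly `λ`-ineffable. -/
def MildlyIneffable (κ lam : Cardinal.{0}) : Prop :=
  ∀ s : Set Ordinal.{0} → Set Ordinal.{0}, (∀ a ∈ Pkl κ lam, s a ⊆ a) →
    ∃ S : Set Ordinal.{0}, S ⊆ Set.Iio lam.ord ∧
      ∀ b ∈ Pkl κ lam, ∃ a ∈ Pkl κ lam, b ⊆ a ∧ S ∩ b = s a ∩ b

/-- `Q` is a maximal `J`-almost disjoint family of `J`-positive sets. -/
def MADOn {α : Type u} (J : Set (Set α)) (X : Set α) (Q : Set (Set α)) : Prop :=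
  Q ⊆ plusOf J X ∧ (∀ A ∈ Q, ∀ B ∈ Q, A ≠ B → A ∩ B ∈ J) ∧
    ∀ C ∈ plusOf J X, ∃ A ∈ Q, A ∩ C ∉ J

/-- `Q` is a maximal disjoint family of `J`-positive sets. -/
def MADdOn {α : Type u} (J : Set (Set α)) (X : Set α) (Q : Set (Set α)) : Prop :=
  Q ⊆ plusOf J X ∧ (∀ A ∈ Q, ∀ B ∈ Q, A ≠ B → A ∩ B = ∅) ∧
    ∀ C ∈ plusOf J X, ∃ A ∈ Q, A ∩ C ∉ J

/-- `(ρ, ν)`-distributivity of an ideal `J` on `P_κ(λ)`. -/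
def DistrPkl (κ lam : Cardinal.{0}) (J : Set (Set (Set Ordinal.{0})))
    (ρ ν : Cardinal.{0}) : Prop :=
  ∀ A ∈ plusOf J (Pkl κ lam), ∀ Q : Ordinal.{0} → Set (Set (Set Ordinal.{0})),
    (∀ i, i < ρ.ord → MADOn J (Pkl κ lam) (Q i) ∧ #(Q i) ≤ Cardinal.lift.{1} ν) →
    ∃ B ∈ plusOf J (Pkl κ lam), B ⊆ A ∧
      ∃ h : Ordinal.{0} → Set (Set Ordinal.{0}),
        (∀ i, i < ρ.ord → h i ∈ Q i) ∧ ∀ i, i < ρ.ord → B \ h i ∈ J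

/-- Disjoint `(ρ, ν)`-distributivity of an ideal `J` on `P_κ(λ)`. -/
def DisjDistrPkl (κ lam : Cardinal.{0}) (J : Set (Set (Set Ordinal.{0})))
    (ρ ν : Cardinal.{0}) : Prop :=
  ∀ A ∈ plusOf J (Pkl κ lam), ∀ Q : Ordinal.{0} → Set (Set (Set Ordinal.{0})),
    (∀ i, i < ρ.ord → MADdOn J (Pkl κ lam) (Q i) ∧ #(Q i) ≤ Cardinal.lift.{1} ν) →
    ∃ B ∈ plusOf J (Pkl κ lam), B ⊆ A ∧
      ∃ h : Ordinal.{0} → Set (Set Ordinal.{0}),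
        (∀ i, i < ρ.ord → h i ∈ Q i) ∧ ∀ i, i < ρ.ord → B \ h i ∈ J

/-- Generic `(ρ, ν)`-distributivity of an ideal `J` on a set `X`. -/
def DistrU {α : Type u} (J : Set (Set α)) (X : Set α) (ρ ν : Cardinal.{u}) : Prop :=
  ∀ A ∈ plusOf J X, ∀ Q : Ordinal.{u} → Set (Set α),
    (∀ i, i < ρ.ord → MADOn J X (Q i) ∧ #(Q i) ≤ ν) →
    ∃ B ∈ plusOf J X, B ⊆ A ∧
      ∃ h : Ordinal.{u} → Set α,
        (∀ i, i < ρ.ord → h i ∈ Q i) ∧ ∀ i, i < ρ.ord → B \ h i ∈ J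

/-- `J` is `κ`-complete. -/
def KappaComplete (κ : Cardinal.{0}) (J : Set (Set (Set Ordinal.{0}))) : Prop :=
  ∀ Z : Set (Set (Set Ordinal.{0})), Z ⊆ J → #Z < Cardinal.lift.{1} κ → ⋃₀ Z ∈ J

/-- `J⁺ → (J⁺, ρ)²` relative to `J` (unbalanced partition relation on pairs
from `P_κ(λ)`). -/
def ArrowPairOrd (κ lam : Cardinal.{0}) (J : Set (Set (Set Ordinal.{0})))
    (ρ : Cardinal.{0}) : Prop :=
  ∀ F : Set Ordinal.{0} → Set Ordinal.{0} → Fin 2, ∀ A ∈ plusOf J (Pkl κ lam),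
    (∃ B ∈ plusOf J (Pkl κ lam), B ⊆ A ∧ ∀ a ∈ B, {b | b ∈ B ∧ F a b ≠ 0} ∈ J) ∨
    (∃ c : Ordinal.{0} → Set Ordinal.{0}, (∀ i, i < ρ.ord → c i ∈ A) ∧
      (∀ i j, i < j → j < ρ.ord → c i ⊂ c j) ∧
      ∀ i j, i < j → j < ρ.ord → F (c i) (c j) = 1)

/-- `X →_κ^J (J⁺, ρ)²` (unbalanced partition relation on `κ × P_κ(λ)`). -/
def ArrowKappaPair (κ lam : Cardinal.{0}) (J : Set (Set (Set Ordinal.{0})))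
    (X : Set (Set (Set Ordinal.{0}))) (ρ : Cardinal.{0}) : Prop :=
  ∀ F : Ordinal.{0} → Set Ordinal.{0} → Fin 2, ∀ A ∈ X,
    (∃ B ∈ plusOf J (Pkl κ lam), B ⊆ A ∧
      ∀ a ∈ B, {b | b ∈ B ∧ F (supk κ a) b ≠ 0} ∈ J) ∨
    (∃ c : Ordinal.{0} → Set Ordinal.{0}, (∀ i, i < ρ.ord → c i ∈ A) ∧
      (∀ i j, i < j → j < ρ.ord → c i ⊂ c j) ∧
      ∀ i j, i < j → j < ρ.ord → F (supk κ (c i)) (c j) = 1)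

/-- `{P_κ(λ)} →_J (J⁺)²_ρ` (balanced partition relation with `ρ` colors). -/
def BalArrowAll (κ lam : Cardinal.{0}) (J : Set (Set (Set Ordinal.{0})))
    (ρ : Cardinal.{0}) : Prop :=
  ∀ F : Set Ordinal.{0} → Set Ordinal.{0} → Ordinal.{0}, (∀ a b, F a b < ρ.ord) →
    ∃ i, i < ρ.ord ∧ ∃ B ∈ plusOf J (Pkl κ lam),
      ∃ Z : Set Ordinal.{0} → Set (Set Ordinal.{0}), (∀ a ∈ B, Z a ∈ J) ∧
        ∀ a ∈ B, ∀ b ∈ B, b ∉ Z a → F a b = i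

/-- `J⁺ →_J (J⁺)²_ω` (balanced partition relation with `ω` colors). -/
def ArrowOmegaColors (κ lam : Cardinal.{0}) (J : Set (Set (Set Ordinal.{0}))) : Prop :=
  ∀ F : Set Ordinal.{0} → Set Ordinal.{0} → ℕ, ∀ A ∈ plusOf J (Pkl κ lam),
    ∃ i : ℕ, ∃ B ∈ plusOf J (Pkl κ lam), B ⊆ A ∧
      ∃ Z : Set Ordinal.{0} → Set (Set Ordinal.{0}), (∀ a ∈ B, Z a ∈ J) ∧
        ∀ a ∈ B, ∀ b ∈ B, b ∉ Z a → F a b = i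

/-- `J⁺ →_J (J⁺)ⁿ_ρ` (balanced partition relation on `n`-tuples with `ρ` colors). -/
def ArrowN (κ lam : Cardinal.{0}) (J : Set (Set (Set Ordinal.{0}))) (n : ℕ)
    (ρ : Cardinal.{0}) : Prop :=
  ∀ F : (Fin n → Set Ordinal.{0}) → Ordinal.{0}, (∀ s, F s < ρ.ord) →
    ∀ A ∈ plusOf J (Pkl κ lam),
      ∃ i, i < ρ.ord ∧ ∃ B ∈ plusOf J (Pkl κ lam), B ⊆ A ∧
        ∃ Z : Set Ordinal.{0} → Set (Set Ordinal.{0}), (∀ a ∈ B, Z a ∈ J) ∧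
          ∀ s : Fin n → Set Ordinal.{0}, (∀ m, s m ∈ B) →
            (∀ m k : Fin n, k < m → s m ∉ Z (s k)) → F s = i

/-- The projected ideal `J ↾ κ` on `κ`. -/
def restrK (κ lam : Cardinal.{0}) (J : Set (Set (Set Ordinal.{0}))) :
    Set (Set Ordinal.{0}) :=
  {X | X ⊆ Set.Iio κ.ord ∧ {a | a ∈ Pkl κ lam ∧ supk κ a ∈ X} ∈ J}

/-- `J` is a weak `π`-point. -/
def WeakPiPoint (κ lam : Cardinal.{0}) (J : Set (Set (Set Ordinal.{0}))) : Prop :=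
  ∀ A ∈ plusOf J (Pkl κ lam), ∀ f : Ordinal.{0} → Set (Set Ordinal.{0}),
    (∀ α, α < κ.ord → f α ∈ J) →
    ∃ B ∈ plusOf J (Pkl κ lam), B ⊆ A ∧ ∀ α, α < κ.ord → B ∩ f α ∈ Ikl κ lam

/-- `J` is a weak `χ`-point. -/
def WeakChiPoint (κ lam : Cardinal.{0}) (J : Set (Set (Set Ordinal.{0}))) : Prop :=
  ∀ A ∈ plusOf J (Pkl κ lam), ∀ g : Ordinal.{0} → Set Ordinal.{0},
    (∀ α, α < κ.ord → g α ∈ Pkl κ lam) →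
    ∃ B ∈ plusOf J (Pkl κ lam), B ⊆ A ∧
      ∀ a ∈ B, ∀ b ∈ B, supk κ a < supk κ b → g (supk κ a) ⊆ b

/-- `C` is a closed unbounded subset of `P_κ(λ)`. -/
def IsClubPkl (κ lam : Cardinal.{0}) (C : Set (Set Ordinal.{0})) : Prop :=
  C ⊆ Pkl κ lam ∧ (∀ a ∈ Pkl κ lam, ∃ b ∈ C, a ⊆ b) ∧
    ∀ β : Ordinal.{0}, 0 < β → β < κ.ord →
      ∀ f : Ordinal.{0} → Set Ordinal.{0},
        (∀ i, i < β → f i ∈ C) → (∀ i j, i ≤ j → j < β → f i ⊆ f j) →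
        (⋃ i ∈ Set.Iio β, f i) ∈ C

/-- The set `S^λ_{κ,λ} = {a ∈ P_κ(λ) : |a| = |a ∩ κ|}`. -/
def Slamset (κ lam : Cardinal.{0}) : Set (Set Ordinal.{0}) :=
  {a | a ∈ Pkl κ lam ∧ #a = #((a ∩ Set.Iio κ.ord : Set Ordinal.{0}))}

/-- The ideal `I_κ` of bounded subsets of `κ`. -/
def Ibd (κ : Cardinal.{0}) : Set (Set Ordinal.{0}) :=
  {X | X ⊆ Set.Iio κ.ord ∧ ∃ α, α < κ.ord ∧ X ⊆ Set.Iio α}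

/-- The ideal extension principle `IE(τ, κ, I_κ)`. -/
def IEkappa (τ κ : Cardinal.{0}) : Prop :=
  ∀ Q : Ordinal.{0} → Set (Set Ordinal.{0}),
    (∀ α < κ.ord, IsPartitionOf (Q α) (Set.Ico α κ.ord) ∧ #(Q α) < Cardinal.lift.{1} τ) →
    ∃ h : Ordinal.{0} → Set Ordinal.{0}, (∀ α < κ.ord, h α ∈ Q α) ∧
      ∃ K : Set (Set Ordinal.{0}), IsIdealOn K (Set.Iio κ.ord) ∧ Ibd κ ⊆ K ∧
        ∀ α < κ.ord, Set.Iio κ.ord \ h α ∈ K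

/-- The transversal property `PT(κ, τ)`. -/
def PT (κ τ : Cardinal.{0}) : Prop :=
  ∀ X : Ordinal.{0} → Set Ordinal.{0},
    (∀ α, α < κ.ord → #(X α) < Cardinal.lift.{1} τ) →
    (¬∃ g : Ordinal.{0} → Ordinal.{0}, (∀ α, α < κ.ord → g α ∈ X α) ∧
        Set.InjOn g (Set.Iio κ.ord)) →
    ∃ b : Set Ordinal.{0}, b ⊆ Set.Iio κ.ord ∧ #b < Cardinal.lift.{1} κ ∧
      ¬∃ g : Ordinal.{0} → Ordinal.{0}, (∀ α ∈ b, g α ∈ X α) ∧ Set.InjOn g b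

/-- `(T, lt)` is a tree whose height function is `ht` : the predecessors of
any node `t` are well-ordered by `lt`, in order type `ht t`. -/
def IsTreeWithHeight (T : Type) (lt : T → T → Prop) (ht : T → Ordinal.{0}) : Prop :=
  (∀ t, ¬lt t t) ∧ (∀ r s t, lt r s → lt s t → lt r t) ∧
    (∀ s t, lt s t → ht s < ht t) ∧
    (∀ t, ∀ α, α < ht t → ∃ s, lt s t ∧ ht s = α) ∧
    (∀ s₁ s₂ t, lt s₁ t → lt s₂ t → ht s₁ = ht s₂ → s₁ = s₂) ∧
    (∀ s₁ s₂ t, lt s₁ t → lt s₂ t → ht s₁ < ht s₂ → lt s₁ s₂)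

/-- The tree property `TP(κ)` : every tree of height `κ` whose levels have
size `< κ` has a `κ`-branch. -/
def TP (κ : Cardinal.{0}) : Prop :=
  ∀ (T : Type) (lt : T → T → Prop) (ht : T → Ordinal.{0}),
    IsTreeWithHeight T lt ht →
    (∀ t, ht t < κ.ord) →
    (∀ α < κ.ord, ∃ t, ht t = α) →
    (∀ α : Ordinal.{0}, #{t : T // ht t = α} < κ) →
    ∃ B : Set T, (∀ s ∈ B, ∀ t ∈ B, s ≠ t → lt s t ∨ lt t s) ∧
      ∀ α < κ.ord, ∃ t ∈ B, ht t = α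


/-- Truncation `a ↦ a ∩ χ` maps `P_κ(λ)` to `P_κ(χ)`. -/
lemma Pkl.inter_mem {κ lam χ : Cardinal.{0}} {a : Set Ordinal.{0}} (ha : a ∈ Pkl κ lam) :
    a ∩ Set.Iio χ.ord ∈ Pkl κ χ :=
  ⟨inter_subset_right, (mk_le_mk_of_subset inter_subset_left).trans_lt ha.2⟩

lemma Pkl.mono {κ lam χ : Cardinal.{0}} (h : χ ≤ lam) : Pkl κ χ ⊆ Pkl κ lam :=
  fun _ ha => ⟨ha.1.trans (Set.Iio_subset_Iio (ord_le_ord.2 h)), ha.2⟩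

/-- The pullback of a subset of `P_κ(χ)` to `P_κ(λ)` along the truncation `c ↦ c ∩ χ`. -/
def pullPkl (κ lam χ : Cardinal.{0}) (W : Set (Set Ordinal.{0})) : Set (Set Ordinal.{0}) :=
  {c | c ∈ Pkl κ lam ∧ c ∩ Set.Iio χ.ord ∈ W}

/-- Truncation is surjective from `P_κ(λ)` onto `P_κ(χ)`, being the identity on `P_κ(χ)`, so the
image of a pullback is the original set. -/
lemma image_pullPkl {κ lam χ : Cardinal.{0}} (h : χ ≤ lam) {W : Set (Set Ordinal.{0})}
    (hW : W ⊆ Pkl κ χ) : (fun c => c ∩ Set.Iio χ.ord) '' pullPkl κ lam χ W = W := by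
  ext x
  constructor
  · rintro ⟨c, hc, rfl⟩
    exact hc.2
  · intro hx
    have hxc : x ∩ Set.Iio χ.ord = x := inter_eq_left.2 (hW hx).1
    exact ⟨x, ⟨Pkl.mono h (hW hx), by rwa [hxc]⟩, hxc⟩

lemma IsPartitionOf.pullPkl {κ lam χ : Cardinal.{0}} (h : χ ≤ lam)
    {Q : Set (Set (Set Ordinal.{0}))} (hQ : IsPartitionOf Q (Pkl κ χ)) :
    IsPartitionOf (pullPkl κ lam χ '' Q) (Pkl κ lam) := by
  obtain ⟨hne, hsub, hdisj, hcov⟩ := hQ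
  refine ⟨?_, ?_, ?_, ?_⟩
  · rintro _ ⟨W, hW, rfl⟩
    have := hne W hW
    rw [← image_pullPkl h (hsub W hW)] at this
    exact this.of_image
  · rintro _ ⟨W, hW, rfl⟩
    exact fun c hc => hc.1
  · rintro _ ⟨W, hW, rfl⟩ _ ⟨V, hV, rfl⟩ hWV
    have hd := hdisj W hW V hV fun e => hWV (by rw [e])
    refine Set.eq_empty_of_forall_notMem fun c hc => ?_
    have : c ∩ Set.Iio χ.ord ∈ W ∩ V := ⟨hc.1.2, hc.2.2⟩
    rw [hd] at this
    exact this
  · refine Set.Subset.antisymm ?_ fun c hc => ?_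
    · rintro c ⟨_, ⟨W, hW, rfl⟩, hc⟩
      exact hc.1
    · have : c ∩ Set.Iio χ.ord ∈ ⋃₀ Q := hcov ▸ Pkl.inter_mem hc
      obtain ⟨W, hW, hcW⟩ := this
      exact ⟨_, ⟨W, hW, rfl⟩, hc, hcW⟩

/-- If `PS⁺(τ, κ, λ)` holds, then `PS⁺(τ, κ, χ)` holds for any
cardinal `χ` with `κ ≤ χ < λ`. -/
theorem stmt1 (κ lam τ : Cardinal.{0}) (hreg : κ.IsRegular) (hunc : ℵ₀ < κ)
    (hkl : κ ≤ lam) (hτ : ℵ₀ ≤ τ) (hτκ : τ ≤ κ) (hPS : PSPlus τ κ lam) :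
    ∀ χ : Cardinal.{0}, κ ≤ χ → χ < lam → PSPlus τ κ χ := by
  intro χ _ hχ Q hQ
  classical
  have hle : χ ≤ lam := hχ.le
  obtain ⟨B, ⟨hBsub, hBcof⟩, h, hh, hBh⟩ := hPS
    (fun a => pullPkl κ lam χ '' Q (a ∩ Set.Iio χ.ord)) (fun a ha =>
      ⟨(hQ _ (Pkl.inter_mem ha)).1.pullPkl hle,
        mk_image_le.trans_lt (hQ _ (Pkl.inter_mem ha)).2⟩)
  -- `s` is a section of the truncation, with values in `B` wherever possible.
  have hs : ∀ x, ∃ a, (x ∈ Pkl κ χ → a ∈ Pkl κ lam ∧ a ∩ Set.Iio χ.ord = x) ∧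
      (x ∈ (fun c => c ∩ Set.Iio χ.ord) '' B → a ∈ B ∧ a ∩ Set.Iio χ.ord = x) := by
    intro x
    by_cases hx : x ∈ (fun c => c ∩ Set.Iio χ.ord) '' B
    · obtain ⟨a, ha, hax⟩ := hx
      exact ⟨a, fun _ => ⟨hBsub ha, hax⟩, fun _ => ⟨ha, hax⟩⟩
    · exact ⟨x, fun hx' => ⟨Pkl.mono hle hx', inter_eq_left.2 hx'.1⟩, fun h' => absurd h' hx⟩
  choose s hs1 hs2 using hs
  refine ⟨(fun c => c ∩ Set.Iio χ.ord) '' B, ⟨?_, ?_⟩,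
    fun x => (fun c => c ∩ Set.Iio χ.ord) '' h (s x), ?_, ?_⟩
  · rintro _ ⟨a, ha, rfl⟩
    exact Pkl.inter_mem (hBsub ha)
  · rintro ⟨-, x, hx, hxB⟩
    refine hBcof ⟨hBsub, x, Pkl.mono hle hx, fun b hb hxb => ?_⟩
    exact hxB _ ⟨b, hb, rfl⟩ (subset_inter hxb hx.1)
  · intro x hx
    obtain ⟨hsx, hsx'⟩ := hs1 x hx
    obtain ⟨W, hW, hWh⟩ := hh _ hsx
    rw [hsx'] at hW
    simp only [← hWh]
    rwa [image_pullPkl hle ((hQ x hx).1.2.1 W hW)]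
  · intro x hx y hy
    obtain ⟨hsx, hsx'⟩ := hs2 x hx
    obtain ⟨hsy, hsy'⟩ := hs2 y hy
    obtain ⟨c, hcx, hcy, hc⟩ := hBh _ hsx _ hsy
    refine ⟨c ∩ Set.Iio χ.ord, ⟨c, hcx, rfl⟩, ⟨c, hcy, rfl⟩, ?_⟩
    rw [← hsx', ← hsy', ← union_inter_distrib_right]
    exact inter_subset_inter_left _ hc
end
end

section
/- Let κ be a regular uncountable cardinal and τ an infinite cardinal ≤ κ. Then PS^+(τ, κ) holds if and only if PS^+(τ, κ, κ) holds. -/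
/-!
Both directions transport partitions along a map between `κ` and `P_κ(κ)`. Initial segments embed
`κ` cofinally into `P_κ(κ)`; conversely `strictSup a`, the least strict upper bound of `a`, maps
`P_κ(κ)` monotonically and cofinally into `κ`, and both facts use that `κ` is regular. A partition
is pulled back along a map by taking the nonempty preimages of its pieces (`pullPartition`), which
does not increase the number of pieces.

* From `κ` to `P_κ(κ)`: pull `Q_{Iio β}` back to `κ \ β` along `γ ↦ Iio γ`. A common element `γ` of
  two selected pieces at `α`, `β` gives the common element `Iio γ ⊇ Iio α ∪ Iio β`.
* From `P_κ(κ)` to `κ`: pull `Q_β`, where `β = strictSup a`, back to `P_κ(κ)` along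
  `c ↦ max β (strictSup c)`. Whenever `a ⊆ c` this map sends `c` to `strictSup c`, so a common
  element `c ⊇ a ∪ b` of two selected pieces yields the common element `strictSup c`.
-/

set_option autoImplicit false

noncomputable section

open Cardinal Set

universe u

/-- The pullback to `Y` of a family `Q` of sets along `f`: the nonempty sets `Y ∩ f ⁻¹' A`,
`A ∈ Q`. -/
def pullPartition {α β : Type u} (f : α → β) (Y : Set α) (Q : Set (Set β)) : Set (Set α) :=
  {P | P.Nonempty ∧ ∃ A ∈ Q, Y ∩ f ⁻¹' A = P}

lemma isPartitionOf_pullPartition {α β : Type u} {f : α → β} {Y : Set α} {X : Set β}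
    {Q : Set (Set β)} (hQ : IsPartitionOf Q X) (hf : ∀ y ∈ Y, f y ∈ X) :
    IsPartitionOf (pullPartition f Y Q) Y := by
  obtain ⟨-, -, hdisj, hcov⟩ := hQ
  refine ⟨fun P hP => hP.1, ?_, ?_, ?_⟩
  · rintro _ ⟨-, A, -, rfl⟩
    exact inter_subset_left
  · rintro _ ⟨-, A, hA, rfl⟩ _ ⟨-, B, hB, rfl⟩ hne
    have hAB : A ≠ B := by rintro rfl; exact hne rfl
    ext y
    simp only [mem_inter_iff, mem_preimage, mem_empty_iff_false, iff_false]
    rintro ⟨⟨-, h1⟩, -, h2⟩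
    have : f y ∈ A ∩ B := ⟨h1, h2⟩
    rw [hdisj A hA B hB hAB] at this
    exact this
  · ext y
    constructor
    · rintro ⟨_, ⟨-, A, -, rfl⟩, hy⟩
      exact hy.1
    · intro hy
      have := hf y hy
      rw [← hcov] at this
      obtain ⟨A, hA, hyA⟩ := this
      exact ⟨Y ∩ f ⁻¹' A, ⟨⟨y, hy, hyA⟩, A, hA, rfl⟩, hy, hyA⟩

lemma mk_pullPartition_le {α β : Type u} (f : α → β) (Y : Set α) (Q : Set (Set β)) :
    #(pullPartition f Y Q) ≤ #Q := by
  have h : pullPartition f Y Q ⊆ (fun A => Y ∩ f ⁻¹' A) '' Q := by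
    rintro P ⟨-, A, hA, rfl⟩
    exact ⟨A, hA, rfl⟩
  exact (mk_le_mk_of_subset h).trans mk_image_le

/-- The least strict upper bound of a set of ordinals, with the junk value `0` if the set is
unbounded. -/
def strictSup (a : Set Ordinal.{0}) : Ordinal.{0} :=
  sInf {β | a ⊆ Set.Iio β}

/-- By regularity, every member of `P_κ(κ)` is bounded in `κ`. -/
lemma exists_bound {κ : Cardinal.{0}} (hreg : κ.IsRegular) {a : Set Ordinal.{0}}
    (ha : a ∈ Pkl κ κ) : ∃ β < κ.ord, a ⊆ Set.Iio β := by
  obtain ⟨hsub, hcard⟩ := ha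
  have hlt : #a < (Ordinal.lift.{1} κ.ord).cof := by
    rwa [← Ordinal.lift_cof, hreg.cof_ord]
  refine ⟨_, Ordinal.sSup_add_one_lt_of_lt_cof hlt hsub, fun x hx => ?_⟩
  have hbdd : BddAbove ((· + 1) '' a) := by
    refine ⟨κ.ord, ?_⟩
    rintro _ ⟨y, hy, rfl⟩
    exact Order.add_one_le_of_lt (hsub hy)
  exact (Order.lt_add_one_iff.2 le_rfl).trans_le (le_csSup hbdd ⟨x, hx, rfl⟩)

lemma strictSup_lt {κ : Cardinal.{0}} (hreg : κ.IsRegular) {a : Set Ordinal.{0}}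
    (ha : a ∈ Pkl κ κ) : strictSup a < κ.ord := by
  obtain ⟨β, hβ, hab⟩ := exists_bound hreg ha
  exact (csInf_le' hab).trans_lt hβ

lemma subset_Iio_strictSup {κ : Cardinal.{0}} (hreg : κ.IsRegular) {a : Set Ordinal.{0}}
    (ha : a ∈ Pkl κ κ) : a ⊆ Set.Iio (strictSup a) := by
  obtain ⟨β, -, hab⟩ := exists_bound hreg ha
  exact csInf_mem (s := {β | a ⊆ Set.Iio β}) ⟨β, hab⟩

lemma strictSup_mono {κ : Cardinal.{0}} (hreg : κ.IsRegular) {a c : Set Ordinal.{0}}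
    (hc : c ∈ Pkl κ κ) (hac : a ⊆ c) : strictSup a ≤ strictSup c :=
  csInf_le' (hac.trans (subset_Iio_strictSup hreg hc))

lemma strictSup_Iio (β : Ordinal.{0}) : strictSup (Set.Iio β) = β := by
  have hmem : β ∈ {γ | Set.Iio β ⊆ Set.Iio γ} := fun x hx => hx
  exact le_antisymm (csInf_le' hmem) (le_csInf ⟨β, hmem⟩ fun γ hγ => Set.Iio_subset_Iio_iff.1 hγ)

lemma Iio_mem_Pkl {κ : Cardinal.{0}} {β : Ordinal.{0}} (hβ : β < κ.ord) :
    Set.Iio β ∈ Pkl κ κ := by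
  refine ⟨Set.Iio_subset_Iio hβ.le, ?_⟩
  rw [mk_Iio_ordinal, lift_lt]
  exact lt_ord.1 hβ

lemma psPlus_of_psPlusOne {κ τ : Cardinal.{0}} (hreg : κ.IsRegular) (H : PSPlusOne τ κ) :
    PSPlus τ κ κ := by
  classical
  intro Q hQ
  obtain ⟨B, hBκ, hBcof, h, hhQ, hh⟩ := H
    (fun β => pullPartition Set.Iio (Set.Ico β κ.ord) (Q (Set.Iio β))) (fun β hβ => by
      obtain ⟨hpart, hcard⟩ := hQ _ (Iio_mem_Pkl hβ)
      exact ⟨isPartitionOf_pullPartition hpart fun γ hγ => Iio_mem_Pkl hγ.2,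
        (mk_pullPartition_le _ _ _).trans_lt hcard⟩)
  choose! g hgQ hg using fun β hβ => (hhQ β hβ).2
  -- Outside the image of `B` the selection is irrelevant, and any piece will do.
  have hne : ∀ a ∈ Pkl κ κ, ∃ A, A ∈ Q a := by
    intro a ha
    have hmem := ha
    rw [← (hQ a ha).1.2.2.2] at hmem
    exact ⟨_, hmem.choose_spec.1⟩
  choose! d hd using hne
  refine ⟨Set.Iio '' B, ⟨?_, ?_⟩,
    fun a => if ∃ β ∈ B, Set.Iio β = a then g (strictSup a) else d a, ?_, ?_⟩
  · rintro _ ⟨β, hβ, rfl⟩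
    exact Iio_mem_Pkl (hBκ hβ)
  · rintro ⟨-, a, ha, hna⟩
    obtain ⟨γ, hγ, haγ⟩ := exists_bound hreg ha
    obtain ⟨β, hβ, hγβ⟩ := hBcof γ hγ
    exact hna _ ⟨β, hβ, rfl⟩ (haγ.trans (Set.Iio_subset_Iio hγβ))
  · intro a ha
    by_cases hex : ∃ β ∈ B, Set.Iio β = a
    · simp only [if_pos hex]
      obtain ⟨β, hβ, rfl⟩ := hex
      rw [strictSup_Iio]
      exact hgQ β hβ
    · simp only [if_neg hex]
      exact hd a ha
  · rintro _ ⟨α, hα, rfl⟩ _ ⟨β, hβ, rfl⟩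
    obtain ⟨γ, h1, h2⟩ := hh α hα β hβ
    rw [← hg α hα] at h1
    rw [← hg β hβ] at h2
    refine ⟨Set.Iio γ, ?_, ?_, union_subset (Set.Iio_subset_Iio h1.1.1)
      (Set.Iio_subset_Iio h2.1.1)⟩
    · have hex : ∃ β' ∈ B, Set.Iio β' = Set.Iio α := ⟨α, hα, rfl⟩
      simp only [if_pos hex, strictSup_Iio]
      exact h1.2
    · have hex : ∃ β' ∈ B, Set.Iio β' = Set.Iio β := ⟨β, hβ, rfl⟩
      simp only [if_pos hex, strictSup_Iio]
      exact h2.2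

lemma psPlusOne_of_psPlus {κ τ : Cardinal.{0}} (hreg : κ.IsRegular) (H : PSPlus τ κ κ) :
    PSPlusOne τ κ := by
  intro Q hQ
  obtain ⟨B, ⟨hBsub, hBpos⟩, h, hhQ, hh⟩ := H
    (fun a => pullPartition (fun c => max (strictSup a) (strictSup c)) (Pkl κ κ)
      (Q (strictSup a))) (fun a ha => by
      have hlt := strictSup_lt hreg ha
      obtain ⟨hpart, hcard⟩ := hQ _ hlt
      exact ⟨isPartitionOf_pullPartition hpart fun c hc =>
          ⟨le_max_left _ _, max_lt hlt (strictSup_lt hreg hc)⟩,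
        (mk_pullPartition_le _ _ _).trans_lt hcard⟩)
  choose! g hgQ hg using fun a ha => (hhQ a ha).2
  -- Several `a ∈ B` may share the same `strictSup a`; fix one representative for each value.
  have hrep : ∀ β ∈ strictSup '' B, ∃ a ∈ B, strictSup a = β := fun β hβ => hβ
  choose! r hrB hr using hrep
  refine ⟨strictSup '' B, ?_, ?_, fun β => g (r β), ?_, ?_⟩
  · rintro _ ⟨a, ha, rfl⟩
    exact strictSup_lt hreg (hBsub ha)
  · intro γ hγ
    by_contra! hcon
    refine hBpos ⟨hBsub, Set.Iio γ, Iio_mem_Pkl hγ, fun b hb hsub => ?_⟩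
    have hle : γ ≤ strictSup b :=
      Set.Iio_subset_Iio_iff.1 (hsub.trans (subset_Iio_strictSup hreg (hBsub hb)))
    exact (hcon _ ⟨b, hb, rfl⟩).not_ge hle
  · intro β hβ
    have := hgQ (r β) (hBsub (hrB β hβ))
    rwa [hr β hβ] at this
  · intro α hα β hβ
    obtain ⟨c, h1, h2, hsub⟩ := hh _ (hrB α hα) _ (hrB β hβ)
    rw [← hg _ (hBsub (hrB α hα))] at h1
    rw [← hg _ (hBsub (hrB β hβ))] at h2
    have e1 := strictSup_mono hreg h1.1 (subset_union_left.trans hsub)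
    have e2 := strictSup_mono hreg h1.1 (subset_union_right.trans hsub)
    refine ⟨strictSup c, ?_, ?_⟩
    · simpa only [mem_preimage, max_eq_right e1] using h1.2
    · simpa only [mem_preimage, max_eq_right e2] using h2.2

/-- `PS⁺(τ, κ)` holds if and only if `PS⁺(τ, κ, κ)` holds. -/
theorem stmt3 (κ τ : Cardinal.{0}) (hreg : κ.IsRegular) (hunc : ℵ₀ < κ)
    (hτ : ℵ₀ ≤ τ) (hτκ : τ ≤ κ) :
    PSPlusOne τ κ ↔ PSPlus τ κ κ := by
  exact ⟨psPlus_of_psPlusOne hreg, psPlusOne_of_psPlus hreg⟩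
end
end

section
/- Let κ be a regular uncountable cardinal and λ ≥ κ a regular cardinal, and let τ ≤ κ be an infinite cardinal. If PS^+(τ, κ, λ) holds, then PS^+(τ, λ) holds. -/
/-!
Both principles are linked by the map `a ↦ sup a` from `P_κ(λ)` to `λ`. It takes values below `λ`
because `λ` is regular and `|a| < κ ≤ λ`; it is monotone; and it sends cofinal subsets of `P_κ(λ)`
to cofinal subsets of `λ`.

Given partitions `Q_β` of `[β, λ)`, partition `P_κ(λ)` for each `a` by placing `c` according to the
piece of `Q_{sup a}` that contains `max (sup a) (sup c)`. If `B` and `h` witness `PS⁺(τ, κ, λ)` for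
these partitions, then `h a` comes from some `W_a ∈ Q_{sup a}`, and for `a, b ∈ B` any
`c ∈ h a ∩ h b` with `a ∪ b ⊆ c` satisfies `sup c ∈ W_a ∩ W_b`. Hence `{sup a : a ∈ B}` together
with the pieces `W_a` (one `a` chosen for each value of the supremum) witnesses `PS⁺(τ, λ)`.
-/

set_option autoImplicit false

noncomputable section

open Cardinal Set

universe u

theorem sSup_lt_of_mem_Pkl {κ lam : Cardinal.{0}} (hlreg : lam.IsRegular) (hkl : κ ≤ lam)
    {a : Set Ordinal.{0}} (ha : a ∈ Pkl κ lam) : sSup a < lam.ord := by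
  refine Ordinal.sSup_lt_of_lt_cof ?_ fun i hi => ha.1 hi
  rw [← Ordinal.lift_cof, hlreg.cof_ord]
  exact ha.2.trans_le (Cardinal.lift_le.2 hkl)

theorem bddAbove_of_mem_Pkl {κ lam : Cardinal.{0}} {a : Set Ordinal.{0}} (ha : a ∈ Pkl κ lam) :
    BddAbove a :=
  ⟨lam.ord, fun _ hi => (ha.1 hi).le⟩

theorem singleton_mem_Pkl {κ lam : Cardinal.{0}} (hκunc : ℵ₀ < κ) {γ : Ordinal.{0}}
    (hγ : γ < lam.ord) : {γ} ∈ Pkl κ lam := by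
  refine ⟨by simpa using hγ, ?_⟩
  rw [Cardinal.mk_singleton, ← Cardinal.lift_one.{0, 1}, Cardinal.lift_lt]
  exact Cardinal.one_lt_aleph0.trans hκunc

/-- The part of `P_κ(λ)` that corresponds, relative to `a`, to a piece `W` of a partition of
`[sup a, λ)`. The maximum makes every `c` land in `[sup a, λ)`; for `c ⊇ a` it is just `sup c`. -/
def pulledPiece (κ lam : Cardinal.{0}) (a : Set Ordinal.{0}) (W : Set Ordinal.{0}) :
    Set (Set Ordinal.{0}) :=
  {c | c ∈ Pkl κ lam ∧ max (sSup a) (sSup c) ∈ W}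

/-- The partition of `P_κ(λ)` induced, relative to `a`, by a partition `R` of `[sup a, λ)`. Empty
pulled-back pieces are discarded. -/
def pulledPartition (κ lam : Cardinal.{0}) (a : Set Ordinal.{0}) (R : Set (Set Ordinal.{0})) :
    Set (Set (Set Ordinal.{0})) :=
  {P | P.Nonempty ∧ ∃ W ∈ R, P = pulledPiece κ lam a W}

theorem isPartitionOf_pulledPartition {κ lam : Cardinal.{0}} (hlreg : lam.IsRegular)
    (hkl : κ ≤ lam) {a : Set Ordinal.{0}} (ha : a ∈ Pkl κ lam) {R : Set (Set Ordinal.{0})}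
    (hR : IsPartitionOf R (Set.Ico (sSup a) lam.ord)) :
    IsPartitionOf (pulledPartition κ lam a R) (Pkl κ lam) := by
  obtain ⟨-, -, hdisj, hcover⟩ := hR
  refine ⟨fun P hP => hP.1, ?_, ?_, ?_⟩
  · rintro P ⟨-, W, -, rfl⟩ c hc
    exact hc.1
  · rintro P ⟨-, W, hW, rfl⟩ P' ⟨-, W', hW', rfl⟩ hne
    have hWW : W ≠ W' := fun h => hne (by rw [h])
    refine Set.eq_empty_of_forall_notMem fun c hc => ?_
    have hmem : max (sSup a) (sSup c) ∈ W ∩ W' := ⟨hc.1.2, hc.2.2⟩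
    rw [hdisj W hW W' hW' hWW] at hmem
    exact hmem
  · refine Set.Subset.antisymm ?_ fun c hc => ?_
    · rintro c ⟨P, ⟨-, W, -, rfl⟩, hc⟩
      exact hc.1
    · have hmem : max (sSup a) (sSup c) ∈ ⋃₀ R := by
        rw [hcover]
        exact ⟨le_max_left _ _,
          max_lt (sSup_lt_of_mem_Pkl hlreg hkl ha) (sSup_lt_of_mem_Pkl hlreg hkl hc)⟩
      obtain ⟨W, hW, hcW⟩ := hmem
      exact ⟨pulledPiece κ lam a W, ⟨⟨c, hc, hcW⟩, W, hW, rfl⟩, hc, hcW⟩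

theorem mk_pulledPartition_le (κ lam : Cardinal.{0}) (a : Set Ordinal.{0})
    (R : Set (Set Ordinal.{0})) : #(pulledPartition κ lam a R) ≤ #R := by
  refine (Cardinal.mk_le_mk_of_subset ?_).trans
    (Cardinal.mk_image_le (f := pulledPiece κ lam a) (s := R))
  rintro P ⟨-, W, hW, rfl⟩
  exact ⟨W, hW, rfl⟩

/-- if `λ` is regular and `PS⁺(τ, κ, λ)` holds, then `PS⁺(τ, λ)`
holds. -/
theorem stmt4 (κ lam τ : Cardinal.{0}) (hκreg : κ.IsRegular) (hκunc : ℵ₀ < κ)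
    (hlreg : lam.IsRegular) (hkl : κ ≤ lam) (hτ : ℵ₀ ≤ τ) (hτκ : τ ≤ κ)
    (hPS : PSPlus τ κ lam) : PSPlusOne τ lam := by
  intro Q hQ
  obtain ⟨B, ⟨hBsub, hBpos⟩, h, hh, hB⟩ := hPS (fun a => pulledPartition κ lam a (Q (sSup a)))
    fun a ha => by
      obtain ⟨hpart, hcard⟩ := hQ _ (sSup_lt_of_mem_Pkl hlreg hkl ha)
      exact ⟨isPartitionOf_pulledPartition hlreg hkl ha hpart,
        (mk_pulledPartition_le κ lam a _).trans_lt hcard⟩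
  have hpiece : ∀ a, ∃ W, a ∈ B → W ∈ Q (sSup a) ∧ h a = pulledPiece κ lam a W := fun a => by
    by_cases ha : a ∈ B
    · obtain ⟨-, W, hW, hWa⟩ := hh a (hBsub ha)
      exact ⟨W, fun _ => ⟨hW, hWa⟩⟩
    · exact ⟨∅, fun ha' => absurd ha' ha⟩
  choose W hW using hpiece
  have hsec : ∀ β, ∃ a, β ∈ sSup '' B → a ∈ B ∧ sSup a = β := fun β => by
    by_cases hβ : β ∈ sSup '' B
    · obtain ⟨a, ha, hab⟩ := hβ
      exact ⟨a, fun _ => ⟨ha, hab⟩⟩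
    · exact ⟨∅, fun hβ' => absurd hβ' hβ⟩
  choose s hs using hsec
  refine ⟨sSup '' B, ?_, ?_, fun β => W (s β), ?_, ?_⟩
  · rintro _ ⟨a, ha, rfl⟩
    exact sSup_lt_of_mem_Pkl hlreg hkl (hBsub ha)
  · intro γ hγ
    by_contra! hcon
    refine hBpos ⟨hBsub, {γ}, singleton_mem_Pkl hκunc hγ, fun b hb hγb => ?_⟩
    exact (hcon _ ⟨b, hb, rfl⟩).not_ge
      (le_csSup (bddAbove_of_mem_Pkl (hBsub hb)) (hγb rfl))
  · intro β hβ
    obtain ⟨hsB, hsβ⟩ := hs β hβ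
    have := (hW _ hsB).1
    rwa [hsβ] at this
  · intro α hα β hβ
    obtain ⟨hsα, -⟩ := hs α hα
    obtain ⟨hsβ, -⟩ := hs β hβ
    obtain ⟨c, hcα, hcβ, hsub⟩ := hB _ hsα _ hsβ
    rw [(hW _ hsα).2] at hcα
    rw [(hW _ hsβ).2] at hcβ
    -- `csSup_le'` needs no nonemptiness: the supremum of the empty set of ordinals is `0`.
    have hle : ∀ a ⊆ c, sSup a ≤ sSup c := fun a hac =>
      csSup_le' fun i hi => le_csSup (bddAbove_of_mem_Pkl hcα.1) (hac hi)
    refine ⟨sSup c, ?_, ?_⟩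
    · simpa [max_eq_right (hle _ (Set.subset_union_left.trans hsub))] using hcα.2
    · simpa [max_eq_right (hle _ (Set.subset_union_right.trans hsub))] using hcβ.2
end
end

section
/- Let κ be a regular uncountable cardinal and λ > κ a cardinal with cf(λ) < κ. If PS^+((cf(λ))^+, κ, λ) holds, then PS^+((cf(λ))^+, λ^+) holds. -/
/-!
The theorem reduces to the existence of a monotone map `φ : P_κ(λ) → λ⁺` with cofinal range. Given
such a `φ` and partitions of the final segments of `λ⁺`, one pulls the partition of `[φ a, λ⁺)` back
to `P_κ(λ)`, adds the piece `{c | φ c < φ a}`, and applies `PS⁺((cf λ)⁺, κ, λ)`. The additional piece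
is never selected on the positive set `B`, since it contains no superset of `a`, and the selected
pieces push forward to a selection on the cofinal set `φ '' B` (`psPlusOne_of_tukey`).

To get `φ` it suffices to find `a α ∈ P_κ(λ)` for `α < λ⁺` such that each `c ∈ P_κ(λ)` includes
`a α` only for boundedly many `α` (`exists_tukey`): `φ c` is then the least strict upper bound of
these `α`. The set `a α` is the range of a function `f α` on `cf λ` many coordinates cofinal in `λ`,
where `(f α)`, `α < λ⁺`, increases modulo bounded sets and `f α` dominates everywhere the functions
indexed by a prescribed set of `κ⁺⁺` predecessors of `α` (`exists_scale`). At ordinals of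
cofinality `κ⁺⁺` this prescribed set is a club. As `λ` is singular of cofinality less than `κ`,
it is larger than `κ⁺⁺`. If unboundedly many `a α` were included in a single `c`, club guessing on
`κ⁺⁺` (`club_guessing`) would produce `κ` many indices along which the functions increase strictly
enough to force `κ ≤ cf λ · |c|`, which contradicts `|c| < κ`.
-/

set_option autoImplicit false

noncomputable section

open Cardinal Set

universe u

/-! ### Bounded sets and recursion below regular cardinals -/

/-- A set of fewer than `c` ordinals below the regular cardinal `c` is bounded below `c`. -/
lemma exists_bound_s5 {c : Cardinal.{0}} (hc : c.IsRegular) (S : Set Ordinal.{0})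
    (hS : ∀ x ∈ S, x < c.ord) (hcard : #S < Cardinal.lift.{1} c) :
    ∃ b < c.ord, ∀ x ∈ S, x < b := by
  refine ⟨sSup ((· + 1) '' S), ?_, ?_⟩
  · apply Ordinal.sSup_add_one_lt_of_lt_cof _ hS
    rwa [← Ordinal.lift_cof, hc.cof_ord]
  · intro x hx
    have hb : BddAbove ((· + 1) '' S) := by
      refine ⟨c.ord + 1, ?_⟩
      rintro _ ⟨y, hy, rfl⟩
      exact add_le_add_left (hS y hy).le 1
    exact (Order.lt_add_one_iff.2 le_rfl).trans_le (le_csSup hb ⟨x, hx, rfl⟩)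

/-- `exists_bound` for families indexed by a set of ordinals. -/
lemma exists_bound_image {c : Cardinal.{0}} (hc : c.IsRegular) (S : Set Ordinal.{0})
    (g : Ordinal.{0} → Ordinal.{0})
    (hS : ∀ x ∈ S, g x < c.ord) (hcard : #S < Cardinal.lift.{1} c) :
    ∃ b < c.ord, ∀ x ∈ S, g x < b := by
  obtain ⟨b, hb, h⟩ := exists_bound_s5 hc (g '' S) (by rintro _ ⟨x, hx, rfl⟩; exact hS x hx)
    (mk_image_le.trans_lt hcard)
  exact ⟨b, hb, fun x hx => h _ ⟨x, hx, rfl⟩⟩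

lemma mk_Iio_lt {c : Cardinal.{0}} {o : Ordinal.{0}} (h : o < c.ord) :
    #(Set.Iio o) < Cardinal.lift.{1} c := by
  rw [mk_Iio_ordinal, lift_lt]
  exact lt_ord.1 h

lemma mk_Iio_ord_lt {c d : Cardinal.{0}} (h : d < c) :
    #(Set.Iio d.ord) < Cardinal.lift.{1} c := mk_Iio_lt (ord_lt_ord.2 h)

lemma exists_bound_nat {c : Cardinal.{0}} (hc : c.IsRegular) (hunc : ℵ₀ < c)
    (g : ℕ → Ordinal.{0}) (hg : ∀ n, g n < c.ord) : ∃ b < c.ord, ∀ n, g n < b := by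
  obtain ⟨b, hb, h⟩ := exists_bound_s5 hc (Set.range g) (by rintro _ ⟨n, rfl⟩; exact hg n)
    (by
      refine ((Set.countable_range g).le_aleph0).trans_lt ?_
      rw [← lift_aleph0.{1, 0}, lift_lt]
      exact hunc)
  exact ⟨b, hb, fun n => h _ ⟨n, rfl⟩⟩

/-- Transfinite recursion: `b j` is the least strict upper bound of the ordinals `G i (b ↾ [0, i])`,
`i < j`. -/
lemma exists_rec (G : Ordinal.{0} → (Ordinal.{0} → Ordinal.{0}) → Ordinal.{0}) :
    ∃ b : Ordinal.{0} → Ordinal.{0}, ∀ j,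
      b j = sInf {o | ∀ i < j, G i (fun k => if k ≤ i then b k else 0) < o} := by
  classical
  let F : ∀ j : Ordinal.{0}, (∀ i, i < j → Ordinal.{0}) → Ordinal.{0} := fun j r =>
    sInf {o | ∀ i, ∀ h : i < j,
      G i (fun k => if hk : k ≤ i then r k (hk.trans_lt h) else 0) < o}
  refine ⟨(wellFounded_lt (α := Ordinal.{0})).fix F, fun j => ?_⟩
  rw [WellFounded.fix_eq]
  simp only [F, dite_eq_ite]

/-- `b` is continuous at every limit index below `η`, phrased so as to be used for increasing `b`.
The index `0` vacuously counts as a limit, so that `b 0 = 0` as soon as `0 < η`. -/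
def ContinuousBelow (b : Ordinal.{0} → Ordinal.{0}) (η : Ordinal.{0}) : Prop :=
  ∀ j < η, (∀ i < j, i + 1 < j) → ∀ y < b j, ∃ i < j, y < b i

/-- Iteration of `G` below the regular cardinal `c`: the sequence `b` is increasing and continuous,
and the value `x j` of `G` at step `j`, computed from `b ↾ [0, j]`, lies between `b j` and
`b (j + 1)`. -/
lemma exists_seq {c : Cardinal.{0}} (hc : c.IsRegular)
    (G : Ordinal.{0} → (Ordinal.{0} → Ordinal.{0}) → Ordinal.{0})
    (hG : ∀ i b, (∀ k, b k < c.ord) → i < c.ord → G i b < c.ord ∧ b i ≤ G i b) :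
    ∃ b : Ordinal.{0} → Ordinal.{0}, ∃ x : Ordinal.{0} → Ordinal.{0},
      (∀ j < c.ord, x j = G j (fun k => if k ≤ j then b k else 0)) ∧
      (∀ j < c.ord, b j < c.ord) ∧ (∀ j < c.ord, x j < c.ord) ∧
      (∀ i j, i < j → j < c.ord → x i < b j) ∧ (∀ j < c.ord, b j ≤ x j) ∧
      (∀ i j, i < j → j < c.ord → b i < b j) ∧ ContinuousBelow b c.ord := by
  obtain ⟨b, hb⟩ := exists_rec G
  have hpos : 0 < c.ord := hc.ord_pos
  have key : ∀ j, j < c.ord → (b j < c.ord ∧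
      ∀ i < j, G i (fun k => if k ≤ i then b k else 0) < b j) := by
    intro j
    induction j using WellFoundedLT.induction with
    | _ j ih =>
      intro hj
      obtain ⟨o, ho, hlt⟩ := exists_bound_image hc (Set.Iio j)
        (fun i => G i (fun k => if k ≤ i then b k else 0)) (by
          intro i hi
          refine (hG i _ ?_ (lt_trans hi hj)).1
          intro k
          split_ifs with hk
          · exact (ih k (hk.trans_lt hi) ((hk.trans_lt hi).trans hj)).1
          · exact hpos) (mk_Iio_lt hj)
      have hne : {o | ∀ i < j, G i (fun k => if k ≤ i then b k else 0) < o}.Nonempty := ⟨o, hlt⟩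
      rw [hb j]
      exact ⟨(csInf_le' (a := o) (by exact hlt)).trans_lt ho, csInf_mem hne⟩
  have hx : ∀ j < c.ord, G j (fun k => if k ≤ j then b k else 0) < c.ord ∧
      b j ≤ G j (fun k => if k ≤ j then b k else 0) := by
    intro j hj
    have := hG j (fun k => if k ≤ j then b k else 0) (by
      intro k
      split_ifs with hk
      · exact (key k (hk.trans_lt hj)).1
      · exact hpos) hj
    simpa using this
  refine ⟨b, fun j => G j (fun k => if k ≤ j then b k else 0), fun j _ => rfl,
    fun j hj => (key j hj).1, fun j hj => (hx j hj).1, fun i j hij hj => (key j hj).2 i hij,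
    fun j hj => (hx j hj).2,
    fun i j hij hj => (hx i (hij.trans hj)).2.trans_lt ((key j hj).2 i hij), ?_⟩
  intro j hj hlim y hy
  by_contra! hcon
  have : b j ≤ y := by
    rw [hb j]
    refine csInf_le' fun i hi => ?_
    exact ((key (i + 1) ((hlim i hi).trans hj)).2 i (Order.lt_add_one_iff.2 le_rfl)).trans_le
      (hcon _ (hlim i hi))
  exact absurd hy this.not_gt

/-! ### Clubs and club guessing -/

/-- `K` is closed unbounded in `c`. Closure is asked for suprema of arbitrary subsets, the empty
one included, so that `0 ∈ K`. -/
def ClubIn (c : Cardinal.{0}) (K : Set Ordinal.{0}) : Prop :=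
  K ⊆ Set.Iio c.ord ∧ (∀ γ < c.ord, ∃ ξ ∈ K, γ < ξ) ∧
    ∀ A, A ⊆ K → ∀ x < c.ord, IsLUB A x → x ∈ K

/-- Closure points of `next` are unbounded in a regular uncountable cardinal. Closure is stated
cofinally, since `next` need not be monotone. -/
lemma exists_closure_point {c : Cardinal.{0}} (hc : c.IsRegular) (hunc : ℵ₀ < c)
    (next : Ordinal.{0} → Ordinal.{0}) (hn : ∀ γ < c.ord, γ < next γ ∧ next γ < c.ord)
    (γ : Ordinal.{0}) (hγ : γ < c.ord) :
    ∃ x < c.ord, γ < x ∧ ∀ y < x, ∃ z, y ≤ z ∧ z < x ∧ next z < x := by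
  have hlt : ∀ n : ℕ, next^[n] γ < c.ord := by
    intro n
    induction n with
    | zero => simpa using hγ
    | succ n ih => rw [Function.iterate_succ_apply']; exact (hn _ ih).2
  have hstep : ∀ n : ℕ, next^[n] γ < next^[n + 1] γ := by
    intro n
    rw [Function.iterate_succ_apply']
    exact (hn _ (hlt n)).1
  obtain ⟨b, hb, hbn⟩ := exists_bound_nat hc hunc (fun n => next^[n] γ) hlt
  let U : Set Ordinal.{0} := {o | ∀ n : ℕ, next^[n] γ < o}
  have hU : sInf U ∈ U := csInf_mem ⟨b, hbn⟩
  refine ⟨sInf U, (csInf_le' (show b ∈ U from hbn)).trans_lt hb, hU 0, ?_⟩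
  intro y hy
  have : ¬ ∀ n : ℕ, next^[n] γ < y := fun h => (csInf_le' (show y ∈ U from h)).not_gt hy
  push Not at this
  obtain ⟨n, h⟩ := this
  refine ⟨_, h, hU n, ?_⟩
  have := hU (n + 1)
  rwa [Function.iterate_succ_apply'] at this

lemma clubIn_inter {c : Cardinal.{0}} (hc : c.IsRegular) (hunc : ℵ₀ < c) (I : Set Ordinal.{0})
    (hI : #I < Cardinal.lift.{1} c) (D : Ordinal.{0} → Set Ordinal.{0})
    (hD : ∀ i ∈ I, ClubIn c (D i)) : ClubIn c {x | x < c.ord ∧ ∀ i ∈ I, x ∈ D i} := by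
  refine ⟨fun x hx => hx.1, ?_, ?_⟩
  · have hnext : ∀ γ : Ordinal.{0}, ∃ γ', γ < c.ord → γ < γ' ∧ γ' < c.ord ∧
        ∀ i ∈ I, ∃ ξ ∈ D i, γ < ξ ∧ ξ < γ' := by
      intro γ
      by_cases hγ : γ < c.ord
      · have h1 : ∀ i, ∃ ξ, i ∈ I → ξ ∈ D i ∧ γ < ξ := by
          intro i
          by_cases hi : i ∈ I
          · obtain ⟨ξ, h, h'⟩ := (hD i hi).2.1 γ hγ
            exact ⟨ξ, fun _ => ⟨h, h'⟩⟩
          · exact ⟨0, fun h => absurd h hi⟩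
        choose g hg using h1
        obtain ⟨b, hb, hbg⟩ := exists_bound_image hc I g
          (fun i hi => (hD i hi).1 (hg i hi).1) hI
        have hlim : γ + 1 < c.ord := (isSuccLimit_ord hc.aleph0_le).add_one_lt hγ
        exact ⟨max b (γ + 1), fun _ => ⟨lt_max_of_lt_right (Order.lt_add_one_iff.2 le_rfl),
          max_lt hb hlim, fun i hi => ⟨g i, (hg i hi).1, (hg i hi).2,
            lt_max_of_lt_left (hbg i hi)⟩⟩⟩
      · exact ⟨0, fun h => absurd h hγ⟩
    choose next hnext using hnext
    intro γ hγ
    obtain ⟨x, hx, hγx, hcl⟩ := exists_closure_point hc hunc next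
      (fun γ h => ⟨(hnext γ h).1, (hnext γ h).2.1⟩) γ hγ
    refine ⟨x, ⟨hx, fun i hi => ?_⟩, hγx⟩
    refine (hD i hi).2.2 (D i ∩ Set.Iio x) Set.inter_subset_left x hx ⟨fun y hy => hy.2.le, ?_⟩
    intro u hu
    by_contra! hux
    obtain ⟨z, huz, hzx, hnz⟩ := hcl u hux
    obtain ⟨ξ, hξ, h1, h2⟩ := (hnext z (hzx.trans hx)).2.2 i hi
    exact absurd (hu ⟨hξ, h2.trans hnz⟩) (huz.trans_lt h1).not_ge
  · intro A hA x hx hlub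
    exact ⟨hx, fun i hi => (hD i hi).2.2 A (fun a ha => (hA ha).2 i hi) x hx hlub⟩

/-- Two increasing continuous cofinal `c`-sequences in `δ` agree on a club of `c`. -/
lemma clubIn_agree {c : Cardinal.{0}} (hc : c.IsRegular) (hunc : ℵ₀ < c)
    {b e : Ordinal.{0} → Ordinal.{0}} {δ : Ordinal.{0}}
    (hb : ∀ i j, i < j → j < c.ord → b i < b j) (he : ∀ i j, i < j → j < c.ord → e i < e j)
    (cb : ContinuousBelow b c.ord) (ce : ContinuousBelow e c.ord)
    (bδ : ∀ i < c.ord, b i < δ) (eδ : ∀ i < c.ord, e i < δ)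
    (bcof : ∀ y < δ, ∃ i < c.ord, y < b i) (ecof : ∀ y < δ, ∃ i < c.ord, y < e i) :
    ClubIn c {j | j < c.ord ∧ b j = e j} := by
  refine ⟨fun j hj => hj.1, ?_, ?_⟩
  · have hnext : ∀ γ : Ordinal.{0}, ∃ γ', γ < c.ord →
        γ < γ' ∧ γ' < c.ord ∧ b γ < e γ' ∧ e γ < b γ' := by
      intro γ
      by_cases hγ : γ < c.ord
      · obtain ⟨i, hi, h1⟩ := bcof _ (eδ γ hγ)
        obtain ⟨j, hj, h2⟩ := ecof _ (bδ γ hγ)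
        have hm : max i (max j γ) < c.ord := max_lt hi (max_lt hj hγ)
        have hs : max i (max j γ) + 1 < c.ord := (isSuccLimit_ord hc.aleph0_le).add_one_lt hm
        have hlt : max i (max j γ) < max i (max j γ) + 1 := Order.lt_add_one_iff.2 le_rfl
        refine ⟨max i (max j γ) + 1, fun _ => ⟨?_, hs, ?_, ?_⟩⟩
        · exact ((le_max_right _ _).trans (le_max_right _ _)).trans_lt hlt
        · exact h2.trans (he _ _ (((le_max_left _ _).trans (le_max_right _ _)).trans_lt hlt) hs)
        · exact h1.trans (hb _ _ ((le_max_left _ _).trans_lt hlt) hs)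
      · exact ⟨0, fun h => absurd h hγ⟩
    choose next hnext using hnext
    intro γ hγ
    obtain ⟨x, hx, hγx, hcl⟩ := exists_closure_point hc hunc next
      (fun γ h => ⟨(hnext γ h).1, (hnext γ h).2.1⟩) γ hγ
    have hlim : ∀ i < x, i + 1 < x := by
      intro i hi
      obtain ⟨z, hiz, hzx, hnz⟩ := hcl i hi
      exact (Order.add_one_le_iff.2 (hiz.trans_lt (hnext z (hzx.trans hx)).1)).trans_lt hnz
    refine ⟨x, ⟨hx, ?_⟩, hγx⟩
    apply le_antisymm
    · by_contra! hlt
      obtain ⟨i, hi, h⟩ := cb x hx hlim _ hlt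
      obtain ⟨z, hiz, hzx, hnz⟩ := hcl i hi
      have h1 : b i ≤ b z := hiz.eq_or_lt.elim (fun h => h ▸ le_rfl)
        fun h => (hb _ _ h (hzx.trans hx)).le
      exact lt_irrefl _ (h.trans_le h1 |>.trans (hnext z (hzx.trans hx)).2.2.1 |>.trans
        (he _ _ hnz hx))
    · by_contra! hlt
      obtain ⟨i, hi, h⟩ := ce x hx hlim _ hlt
      obtain ⟨z, hiz, hzx, hnz⟩ := hcl i hi
      have h1 : e i ≤ e z := hiz.eq_or_lt.elim (fun h => h ▸ le_rfl)
        fun h => (he _ _ h (hzx.trans hx)).le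
      exact lt_irrefl _ (h.trans_le h1 |>.trans (hnext z (hzx.trans hx)).2.2.2 |>.trans
        (hb _ _ hnz hx))
  · intro A hA x hx hlub
    by_cases hxA : x ∈ A
    · exact hA hxA
    have happ : ∀ i < x, ∃ a ∈ A, i < a ∧ a < x := by
      intro i hi
      obtain ⟨a, ha, h⟩ := (lt_isLUB_iff hlub).1 hi
      exact ⟨a, ha, h, lt_of_le_of_ne (hlub.1 ha) (fun h => hxA (h ▸ ha))⟩
    have hlim : ∀ i < x, i + 1 < x := by
      intro i hi
      obtain ⟨a, ha, h, h'⟩ := happ i hi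
      exact (Order.add_one_le_iff.2 h).trans_lt h'
    refine ⟨hx, le_antisymm ?_ ?_⟩
    · by_contra! hlt
      obtain ⟨i, hi, h⟩ := cb x hx hlim _ hlt
      obtain ⟨a, ha, hia, hax⟩ := happ i hi
      have := (hA ha).2
      exact lt_irrefl _ (h.trans ((hb _ _ hia (hax.trans hx)).trans
        (this ▸ he _ _ hax hx)))
    · by_contra! hlt
      obtain ⟨i, hi, h⟩ := ce x hx hlim _ hlt
      obtain ⟨a, ha, hia, hax⟩ := happ i hi
      have := (hA ha).2
      exact lt_irrefl _ (h.trans ((he _ _ hia (hax.trans hx)).trans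
        (this ▸ hb _ _ hax hx)))

/-- The supremum of `D ∩ [0, γ]`, which for closed `D` is the largest element of `D` not exceeding
`γ`. -/
def glue (D : Set Ordinal.{0}) (γ : Ordinal.{0}) : Ordinal.{0} := sSup (D ∩ Set.Iic γ)

lemma glue_isLUB (D : Set Ordinal.{0}) (γ : Ordinal.{0}) : IsLUB (D ∩ Set.Iic γ) (glue D γ) :=
  isLUB_csSup' ⟨γ, fun _ h => h.2⟩

lemma glue_le (D : Set Ordinal.{0}) (γ : Ordinal.{0}) : glue D γ ≤ γ :=
  (glue_isLUB D γ).2 fun _ h => h.2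

lemma le_glue {D : Set Ordinal.{0}} {γ d : Ordinal.{0}} (hd : d ∈ D) (h : d ≤ γ) :
    d ≤ glue D γ := (glue_isLUB D γ).1 ⟨hd, h⟩

lemma glue_mem {c : Cardinal.{0}} {D : Set Ordinal.{0}} (hD : ClubIn c D) {γ : Ordinal.{0}}
    (h : γ < c.ord) : glue D γ ∈ D :=
  hD.2.2 _ Set.inter_subset_left _ ((glue_le D γ).trans_lt h) (glue_isLUB D γ)

lemma glue_mono {D D' : Set Ordinal.{0}} (h : D ⊆ D') (γ : Ordinal.{0}) :
    glue D γ ≤ glue D' γ :=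
  (glue_isLUB D γ).2 fun _ hx => le_glue (h hx.1) hx.2

/-- `l` restricted to `κ` takes values below `j`, and these are cofinal in `j`. -/
def IsLadder (κ : Cardinal.{0}) (l : Ordinal.{0} → Ordinal.{0}) (j : Ordinal.{0}) : Prop :=
  (∀ ξ < κ.ord, l ξ < j) ∧ ∀ y < j, ∃ ξ < κ.ord, y < l ξ

lemma le_mk_of_unbounded {κ : Cardinal.{0}} (hκ : κ.IsRegular) {l : Ordinal.{0} → Ordinal.{0}}
    {j : Ordinal.{0}} (hl : IsLadder κ l j) (hmono : ∀ ξ ζ, ξ < ζ → ζ < κ.ord → l ξ < l ζ)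
    {A : Set Ordinal.{0}} (hA : ∀ a ∈ A, a < j) (hcof : ∀ y < j, ∃ a ∈ A, y < a) :
    Cardinal.lift.{1} κ ≤ #A := by
  by_contra! hlt
  have h1 : ∀ a, ∃ ξ, a ∈ A → ξ < κ.ord ∧ a < l ξ := by
    intro a
    by_cases ha : a ∈ A
    · obtain ⟨ξ, h, h'⟩ := hl.2 a (hA a ha)
      exact ⟨ξ, fun _ => ⟨h, h'⟩⟩
    · exact ⟨0, fun h => absurd h ha⟩
  choose g hg using h1
  obtain ⟨ξ, hξ, hb⟩ := exists_bound_image hκ A g (fun a ha => (hg a ha).1) hlt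
  obtain ⟨a, ha, h⟩ := hcof _ (hl.1 ξ hξ)
  exact lt_irrefl _ (h.trans ((hg a ha).2.trans (hmono _ _ (hb a ha) hξ)))

/-- A form of Shelah's club guessing on points of cofinality `κ` in `κ⁺⁺`: there are sets `C j`,
`j < κ⁺⁺`, such that every club of `κ⁺⁺` includes some `C j` of size at least `κ`. If ladders glued
to a club `D` do not guess the club `star D`, iterating `star` along `κ⁺` gives decreasing clubs
`D i`. At a limit point of the last one the glued ladders stabilise, because a non-increasing
sequence of ordinals is eventually constant and `κ < κ⁺`; the stable ladder is then included in the
club it was supposed to avoid. -/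
lemma club_guessing {κ : Cardinal.{0}} (hκ : κ.IsRegular) :
    ∃ C : Ordinal.{0} → Set Ordinal.{0},
      ∀ K, ClubIn (Order.succ (Order.succ κ)) K →
        ∃ j < (Order.succ (Order.succ κ)).ord, C j ⊆ K ∧ Cardinal.lift.{1} κ ≤ #(C j) := by
  classical
  set ν := Order.succ κ with hν
  set μ := Order.succ ν with hμ
  have hκ0 : ℵ₀ ≤ κ := hκ.aleph0_le
  have hκν : κ < ν := Order.lt_succ κ
  have hνμ : ν < μ := Order.lt_succ ν
  have hνr : ν.IsRegular := isRegular_succ hκ0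
  have hμr : μ.IsRegular := isRegular_succ (hκ0.trans hκν.le)
  have hμu : ℵ₀ < μ := (hκ0.trans_lt hκν).trans hνμ
  -- a ladder in every ordinal admitting one
  let P : Ordinal.{0} → (Ordinal.{0} → Ordinal.{0}) → Prop := fun j l =>
    IsLadder κ l j ∧ ∀ ξ ζ, ξ < ζ → ζ < κ.ord → l ξ < l ζ
  have hlad : ∀ j, ∃ l : Ordinal.{0} → Ordinal.{0}, (∃ l, P j l) → P j l := by
    intro j
    by_cases h : ∃ l, P j l
    · exact ⟨h.choose, fun _ => h.choose_spec⟩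
    · exact ⟨fun _ => 0, fun h' => absurd h' h⟩
  choose l hl using hlad
  by_contra! hcon
  have hstar : ∀ D : Set Ordinal.{0}, ∃ K, ClubIn μ K ∧ ∀ j < μ.ord,
      (fun ξ => glue D (l j ξ)) '' Set.Iio κ.ord ⊆ K →
      #((fun ξ => glue D (l j ξ)) '' Set.Iio κ.ord) < Cardinal.lift.{1} κ :=
    fun D => hcon fun j => (fun ξ => glue D (l j ξ)) '' Set.Iio κ.ord
  choose star hstar1 hstar2 using hstar
  -- a decreasing sequence of clubs, each inside a counterexample to guessing for the previous ones
  obtain ⟨D, hD⟩ : ∃ D : Ordinal.{0} → Set Ordinal.{0}, ∀ i,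
      D i = {x | x < μ.ord ∧ ∀ i' ∈ Set.Iio i, x ∈ star (D i')} := by
    let F : ∀ i : Ordinal.{0}, (∀ i', i' < i → Set Ordinal.{0}) → Set Ordinal.{0} := fun i r =>
      {x | x < μ.ord ∧ ∀ i', ∀ h : i' < i, x ∈ star (r i' h)}
    refine ⟨(wellFounded_lt (α := Ordinal.{0})).fix F, fun i => ?_⟩
    rw [WellFounded.fix_eq]
    rfl
  have hanti : ∀ i i', i ≤ i' → D i' ⊆ D i := by
    intro i i' h x hx
    rw [hD] at hx ⊢
    exact ⟨hx.1, fun k hk => hx.2 k (lt_of_lt_of_le hk h)⟩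
  have hclub : ∀ i ≤ ν.ord, ClubIn μ (D i) := by
    intro i hi
    rw [hD i]
    exact clubIn_inter hμr hμu _ (mk_Iio_lt (hi.trans_lt (ord_lt_ord.2 hνμ))) _
      fun i' _ => hstar1 _
  -- a point of cofinality `κ` which is a limit of the last club
  have hE := hclub ν.ord le_rfl
  have hnx : ∀ γ, ∃ d, γ < μ.ord → d ∈ D ν.ord ∧ γ < d := by
    intro γ
    by_cases h : γ < μ.ord
    · obtain ⟨d, h1, h2⟩ := hE.2.1 γ h
      exact ⟨d, fun _ => ⟨h1, h2⟩⟩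
    · exact ⟨0, fun h' => absurd h' h⟩
  choose nx hnx using hnx
  obtain ⟨b, x, hx, hbμ, hxμ, hxb, hbx, hbm, hbc⟩ := exists_seq hμr (fun i b => nx (b i))
    (fun i b hb _ => ⟨hE.1 (hnx _ (hb i)).1, (hnx _ (hb i)).2.le⟩)
  have hκμ : κ.ord < μ.ord := ord_lt_ord.2 (hκν.trans hνμ)
  have hxD : ∀ i < μ.ord, x i ∈ D ν.ord := by
    intro i hi
    rw [hx i hi]
    simpa using (hnx _ (hbμ i hi)).1
  have hκlim : ∀ i < κ.ord, i + 1 < κ.ord := fun i hi => (isSuccLimit_ord hκ0).add_one_lt hi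
  set j := b κ.ord with hj
  have hjμ : j < μ.ord := hbμ _ hκμ
  have hPj : P j (l j) := hl j ⟨b, ⟨fun ξ hξ => hbm _ _ hξ hκμ,
    fun y hy => hbc _ hκμ hκlim y hy⟩, fun ξ ζ h h' => hbm _ _ h (h'.trans hκμ)⟩
  -- the glued ladder stabilises before `κ⁺`
  have hstab : ∀ ξ, ∃ i, i < ν.ord ∧ ∀ i', i ≤ i' → i' < ν.ord →
      glue (D i') (l j ξ) = glue (D i) (l j ξ) := by
    intro ξ
    let V : Set Ordinal.{0} := (fun i => glue (D i) (l j ξ)) '' Set.Iio ν.ord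
    have hV : sInf V ∈ V := csInf_mem ⟨_, 0, hνr.ord_pos, rfl⟩
    obtain ⟨i, hi, hiV⟩ := hV
    refine ⟨i, hi, fun i' hii' hi' => le_antisymm (glue_mono (hanti _ _ hii') _) ?_⟩
    have : sInf V ≤ glue (D i') (l j ξ) := csInf_le' ⟨i', hi', rfl⟩
    simpa only [hiV] using this
  choose st hst1 hst2 using hstab
  obtain ⟨i, hi, hsti⟩ := exists_bound_image hνr (Set.Iio κ.ord) st (fun ξ _ => hst1 ξ)
    (mk_Iio_ord_lt hκν)
  have hi1 : i + 1 < ν.ord := (isSuccLimit_ord hνr.aleph0_le).add_one_lt hi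
  have hii1 : i < i + 1 := Order.lt_add_one_iff.2 le_rfl
  refine (hstar2 (D i) j hjμ ?_).not_ge ?_
  · rintro _ ⟨ξ, hξ, rfl⟩
    have h1 : glue (D i) (l j ξ) = glue (D (i + 1)) (l j ξ) := by
      rw [hst2 ξ i (hsti ξ hξ).le hi, hst2 ξ (i + 1) ((hsti ξ hξ).le.trans hii1.le) hi1]
    have h2 : glue (D (i + 1)) (l j ξ) ∈ D (i + 1) :=
      glue_mem (hclub _ hi1.le) ((hPj.1.1 ξ hξ).trans hjμ)
    dsimp only
    rw [h1]
    exact ((Set.ext_iff.1 (hD (i + 1)) _).1 h2).2 i hii1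
  · refine le_mk_of_unbounded hκ hPj.1 hPj.2 ?_ ?_
    · rintro _ ⟨ξ, hξ, rfl⟩
      exact (glue_le _ _).trans_lt (hPj.1.1 ξ hξ)
    · intro y hy
      obtain ⟨k, hk, hyk⟩ := hbc _ hκμ hκlim y hy
      have hxj : x k < j := hxb _ _ hk hκμ
      obtain ⟨ξ, hξ, h⟩ := hPj.1.2 _ hxj
      refine ⟨_, ⟨ξ, hξ, rfl⟩, ?_⟩
      refine (hyk.trans_le (hbx k (hk.trans hκμ))).trans_le (le_glue ?_ h.le)
      exact hanti _ _ hi.le (hxD k (hk.trans hκμ))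

/-! ### Increasing sequences of functions below a singular cardinal -/

/-- A `λ⁺`-sequence of functions, increasing modulo bounded subsets of `λ`, with everywhere
domination over a prescribed set `E α` of at most `μ < λ` predecessors of `α`. The value at `i` is
below `|i|⁺`, since only `|i|` many predecessors have to be dominated there. -/
lemma exists_scale {μ lam : Cardinal.{0}} (hμ : ℵ₀ ≤ μ)
    (E : Ordinal.{0} → Set Ordinal.{0}) (hE : ∀ α, #(E α) ≤ Cardinal.lift.{1} μ) :
    ∃ f : Ordinal.{0} → Ordinal.{0} → Ordinal.{0},
      (∀ α < (Order.succ lam).ord, ∀ i, μ.ord ≤ i → i < lam.ord → f α i < lam.ord) ∧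
      (∀ β α, β < α → α < (Order.succ lam).ord → ∃ i₀ < lam.ord, ∀ i, i₀ ≤ i → μ.ord ≤ i →
        i < lam.ord → f β i < f α i) ∧
      (∀ β α, β < α → α < (Order.succ lam).ord → β ∈ E α → ∀ i, μ.ord ≤ i →
        i < lam.ord → f β i < f α i) := by
  classical
  have he : ∀ α : Ordinal.{0}, ∃ e : Ordinal.{0} → Ordinal.{0}, α < (Order.succ lam).ord →
      (∀ β < α, e β < lam.ord) ∧ Set.InjOn e (Set.Iio α) := by
    intro α
    by_cases hα : α < (Order.succ lam).ord
    · have h1 : α.card ≤ lam := Order.lt_succ_iff.1 (lt_ord.1 hα)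
      have h2 : #(Set.Iio α) ≤ #(Set.Iio lam.ord) := by
        rw [mk_Iio_ordinal, mk_Iio_ordinal, card_ord]
        exact lift_le.2 h1
      obtain ⟨g⟩ := h2
      refine ⟨fun β => if h : β < α then (g ⟨β, h⟩ : Ordinal.{0}) else 0, fun _ => ⟨?_, ?_⟩⟩
      · intro β hβ
        simp only [hβ, dite_true]
        exact (g ⟨β, hβ⟩).2
      · intro β hβ β' hβ' h
        have hβ1 : β < α := hβ
        have hβ2 : β' < α := hβ'
        simp only [hβ1, hβ2, dite_true] at h
        have := g.injective (Subtype.ext h)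
        exact congrArg Subtype.val this
    · exact ⟨fun _ => 0, fun h => absurd h hα⟩
  choose e he using he
  obtain ⟨f, hf⟩ : ∃ f : Ordinal.{0} → Ordinal.{0} → Ordinal.{0}, ∀ α i,
      f α i = sInf {o | ∀ β < α, (e α β < i ∨ β ∈ E α) → f β i < o} := by
    let F : ∀ α : Ordinal.{0}, (∀ β, β < α → Ordinal.{0} → Ordinal.{0}) →
        Ordinal.{0} → Ordinal.{0} := fun α r i =>
      sInf {o | ∀ β, ∀ h : β < α, (e α β < i ∨ β ∈ E α) → r β h i < o}
    refine ⟨(wellFounded_lt (α := Ordinal.{0})).fix F, fun α i => ?_⟩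
    rw [WellFounded.fix_eq]
  have key : ∀ i, μ.ord ≤ i → ∀ α, α < (Order.succ lam).ord →
      f α i < (Order.succ i.card).ord ∧
        ∀ β < α, (e α β < i ∨ β ∈ E α) → f β i < f α i := by
    intro i hi α
    have hμi : μ ≤ i.card := ord_le.1 hi
    have hreg : (Order.succ i.card).IsRegular := isRegular_succ (hμ.trans hμi)
    induction α using WellFoundedLT.induction with
    | _ α ih =>
      intro hα
      let S : Set Ordinal.{0} := {β | β < α ∧ (e α β < i ∨ β ∈ E α)}
      have hS : #S < Cardinal.lift.{1} (Order.succ i.card) := by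
        have hsub : S ⊆ {β | β < α ∧ e α β < i} ∪ E α := by
          rintro β ⟨h, h' | h'⟩
          · exact Or.inl ⟨h, h'⟩
          · exact Or.inr h'
        have h1 : #({β | β < α ∧ e α β < i} : Set Ordinal.{0}) ≤ Cardinal.lift.{1} i.card := by
          rw [← mk_Iio_ordinal]
          refine mk_le_of_injective (f := fun β => ⟨e α β.1, β.2.2⟩) ?_
          intro β β' h
          exact Subtype.ext ((he α hα).2 β.2.1 β'.2.1 (congrArg Subtype.val h))
        have h2 : #S ≤ Cardinal.lift.{1} i.card := by
          refine (mk_le_mk_of_subset hsub).trans ((mk_union_le _ _).trans ?_)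
          refine (add_le_add h1 ((hE α).trans (lift_le.2 hμi))).trans ?_
          rw [add_eq_self]
          rw [← lift_aleph0.{1, 0}, lift_le]
          exact hμ.trans hμi
        exact h2.trans_lt (lift_lt.2 (Order.lt_succ _))
      obtain ⟨o, ho, hlt⟩ := exists_bound_image hreg S (fun β => f β i)
        (fun β hβ => (ih β hβ.1 (hβ.1.trans hα)).1) hS
      have hmem : o ∈ {o | ∀ β < α, (e α β < i ∨ β ∈ E α) → f β i < o} :=
        fun β h h' => hlt β ⟨h, h'⟩
      rw [hf α i]
      exact ⟨(csInf_le' hmem).trans_lt ho, csInf_mem ⟨o, hmem⟩⟩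
  refine ⟨f, ?_, ?_, ?_⟩
  · intro α hα i hi hil
    refine (key i hi α hα).1.trans_le ?_
    exact ord_le_ord.2 (Order.succ_le_of_lt (lt_ord.1 hil))
  · intro β α hβ hα
    by_cases hlam : ℵ₀ ≤ lam
    · refine ⟨e α β + 1, (isSuccLimit_ord hlam).add_one_lt ((he α hα).1 β hβ), ?_⟩
      intro i hi hμi hil
      exact (key i hμi α hα).2 β hβ (Or.inl (Order.add_one_le_iff.1 hi))
    · refine ⟨e α β, (he α hα).1 β hβ, fun i _ hμi hil => absurd ?_ hlam⟩
      exact hμ.trans (ord_le_ord.1 (hμi.trans hil.le))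
  · intro β α hβ hα hβE i hμi hil
    exact (key i hμi α hα).2 β hβ (Or.inr hβE)

/-- A cofinal subset of `λ` of size at most `cf λ`, above a given point. -/
lemma exists_cofinal_set {lam : Cardinal.{0}} {m : Ordinal.{0}} (hm : m < lam.ord) :
    ∃ I : Set Ordinal.{0}, (∀ i ∈ I, m ≤ i ∧ i < lam.ord) ∧
      (∀ y < lam.ord, ∃ i ∈ I, y ≤ i) ∧ #I ≤ Cardinal.lift.{1} lam.ord.cof := by
  obtain ⟨s, hs, hcard⟩ := Order.exists_cof_eq (Set.Iio lam.ord)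
  refine ⟨(fun x : Set.Iio lam.ord => max m x.1) '' s, ?_, ?_, ?_⟩
  · rintro _ ⟨x, hx, rfl⟩
    exact ⟨le_max_left _ _, max_lt hm x.2⟩
  · intro y hy
    obtain ⟨x, hx, h⟩ := hs ⟨y, hy⟩
    exact ⟨_, ⟨x, hx, rfl⟩, le_max_of_le_right h⟩
  · refine mk_image_le.trans ?_
    rw [hcard, Ordinal.cof_Iio, Ordinal.lift_cof]

/-! ### An unbounded `λ⁺`-sequence in `P_κ(λ)` -/

/-- Tukey-type unboundedness: there are `a α ∈ P_κ(λ)`, `α < λ⁺`, such that every element of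
`P_κ(λ)` includes `a α` only for boundedly many `α < λ⁺`.

The set `a α` is the range of `f α` on a cofinal set `I` of `cf λ` coordinates, where `f` is the
sequence of `exists_scale` for the sets `E δ` enumerated by a fixed continuous cofinal
`κ⁺⁺`-sequence in `δ`. Were the bound to fail for `c`, one could build a continuous sequence
`b i ≤ x i < b (i + 1)` with all `a (x i) ⊆ c`, where `f (x i)` moreover eventually dominates, for
each guess `C j`, the functions `f (b k)` with `k ∈ C j`, `k ≤ i`, provided that they have a common
eventual bound. At `δ = b κ⁺⁺` the sequence `b` agrees with the fixed one on a club, so some `C j`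
of size at least `κ` consists of points of agreement. There `f δ` is a common bound, and
`γ ↦ (i, f (x γ) i)`, for suitable `i ∈ I`, injects the non-maximal elements of `C j` into the set
`I × c`, of size less than `κ`. -/
lemma exists_tukey {κ lam : Cardinal.{0}} (hreg : κ.IsRegular)
    (hμl : Order.succ (Order.succ κ) < lam) (hcf : lam.ord.cof < κ) :
    ∃ a : Ordinal.{0} → Set Ordinal.{0}, (∀ α < (Order.succ lam).ord, a α ∈ Pkl κ lam) ∧
      ∀ c ∈ Pkl κ lam, ∃ γ < (Order.succ lam).ord, ∀ α < (Order.succ lam).ord,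
        a α ⊆ c → α < γ := by
  classical
  obtain ⟨C, hC⟩ := club_guessing hreg
  set μ := Order.succ (Order.succ κ) with hμ
  set L := (Order.succ lam).ord with hL
  have hκ0 : ℵ₀ ≤ κ := hreg.aleph0_le
  have hκν : κ < Order.succ κ := Order.lt_succ κ
  have hνμ : Order.succ κ < μ := Order.lt_succ _
  have hμr : μ.IsRegular := isRegular_succ (hκ0.trans hκν.le)
  have hμu : ℵ₀ < μ := (hκ0.trans_lt hκν).trans hνμ
  have hμ0 : ℵ₀ ≤ μ := hμu.le
  have hLr : (Order.succ lam).IsRegular := isRegular_succ (hμ0.trans hμl.le)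
  have hμL' : μ < Order.succ lam := hμl.trans (Order.lt_succ lam)
  have hμL : μ.ord < L := ord_lt_ord.2 hμL'
  have hμlim : ∀ i < μ.ord, i + 1 < μ.ord := fun i hi => (isSuccLimit_ord hμ0).add_one_lt hi
  -- continuous cofinal `μ`-sequences
  let P : Ordinal.{0} → (Ordinal.{0} → Ordinal.{0}) → Prop := fun δ e =>
    (∀ i j, i < j → j < μ.ord → e i < e j) ∧ ContinuousBelow e μ.ord ∧
      (∀ i < μ.ord, e i < δ) ∧ ∀ y < δ, ∃ i < μ.ord, y < e i
  have he : ∀ δ, ∃ e : Ordinal.{0} → Ordinal.{0}, (∃ e, P δ e) → P δ e := by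
    intro δ
    by_cases h : ∃ e, P δ e
    · exact ⟨h.choose, fun _ => h.choose_spec⟩
    · exact ⟨fun _ => 0, fun h' => absurd h' h⟩
  choose e he using he
  obtain ⟨f, hf1, hf2, hf3⟩ := exists_scale (lam := lam) hμ0 (fun δ => e δ '' Set.Iio μ.ord)
    (fun δ => mk_image_le.trans (by rw [mk_Iio_ordinal, card_ord]))
  obtain ⟨I, hI1, hI2, hI3⟩ := exists_cofinal_set (ord_lt_ord.2 hμl)
  refine ⟨fun α => f α '' I, ?_, ?_⟩
  · intro α hα
    refine ⟨?_, mk_image_le.trans_lt (hI3.trans_lt (lift_lt.2 hcf))⟩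
    rintro _ ⟨i, hi, rfl⟩
    exact hf1 α hα i (hI1 i hi).1 (hI1 i hi).2
  rintro c ⟨-, hcκ⟩
  by_contra! hcon
  -- eventual domination of the functions indexed by `T`
  let Dom : Set Ordinal.{0} → Ordinal.{0} → Prop := fun T α => α < L ∧ ∃ i₀ < lam.ord,
    ∀ i, i₀ ≤ i → μ.ord ≤ i → i < lam.ord → ∀ t ∈ T, f t i ≤ f α i
  have hσ : ∀ T, ∃ σ, σ < L ∧ ((∃ α, Dom T α) → Dom T σ) := by
    intro T
    by_cases h : ∃ α, Dom T α
    · exact ⟨h.choose, h.choose_spec.1, fun _ => h.choose_spec⟩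
    · exact ⟨0, hLr.ord_pos, fun h' => absurd h' h⟩
  choose σ hσ1 hσ2 using hσ
  let T : Ordinal.{0} → (Ordinal.{0} → Ordinal.{0}) → Ordinal.{0} → Set Ordinal.{0} :=
    fun i b j => b '' {k | k ∈ C j ∧ k ≤ i}
  have hG : ∀ (i : Ordinal.{0}) (b : Ordinal.{0} → Ordinal.{0}), ∃ x, b i < L →
      x < L ∧ f x '' I ⊆ c ∧ b i ≤ x ∧ ∀ j < μ.ord, σ (T i b j) < x := by
    intro i b
    by_cases hbi : b i < L
    · obtain ⟨s, hs, hsj⟩ := exists_bound_image hLr (Set.Iio μ.ord) (fun j => σ (T i b j))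
        (fun j _ => hσ1 _) (mk_Iio_ord_lt hμL')
      obtain ⟨x, hx, hxc, hx'⟩ := hcon (max s (b i)) (max_lt hs hbi)
      exact ⟨x, fun _ => ⟨hx, hxc, (le_max_right _ _).trans hx',
        fun j hj => (hsj j hj).trans_le ((le_max_left _ _).trans hx')⟩⟩
    · exact ⟨0, fun h => absurd h hbi⟩
  choose G hG using hG
  obtain ⟨b, x, hx, hbL, hxL, hxb, hbx, hbm, hbc⟩ := exists_seq hLr G
    (fun i b hb _ => ⟨(hG i b (hb i)).1, (hG i b (hb i)).2.2.1⟩)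
  have hTx : ∀ i < L, f (x i) '' I ⊆ c ∧ ∀ j < μ.ord, σ (T i b j) < x i := by
    intro i hi
    have h := hG i (fun k => if k ≤ i then b k else 0) (by simpa using hbL i hi)
    rw [← hx i hi] at h
    refine ⟨h.2.1, fun j hj => ?_⟩
    have hT : T i (fun k => if k ≤ i then b k else 0) j = T i b j := by
      refine Set.image_congr fun k hk => ?_
      simp [hk.2]
    rw [← hT]
    exact h.2.2.2 j hj
  set δ := b μ.ord with hδ
  have hδL : δ < L := hbL _ hμL
  have hb1 : ∀ i j, i < j → j < μ.ord → b i < b j := fun i j h h' => hbm i j h (h'.trans hμL)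
  have hb2 : ContinuousBelow b μ.ord := fun j hj => hbc j (hj.trans hμL)
  have hb3 : ∀ i < μ.ord, b i < δ := fun i hi => hbm _ _ hi hμL
  have hb4 : ∀ y < δ, ∃ i < μ.ord, y < b i := hbc _ hμL hμlim
  obtain ⟨he1, he2, he3, he4⟩ := he δ ⟨b, hb1, hb2, hb3, hb4⟩
  obtain ⟨j, hj, hCK, hCκ⟩ := hC _ (clubIn_agree hμr hμu hb1 he1 hb2 he2 hb3 he3 hb4 he4)
  have hCμ : ∀ k ∈ C j, k < μ.ord := fun k hk => (hCK hk).1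
  -- for `γ < η` in the guessed set, `f (x γ)` and `f (x η)` differ if the same `i` is chosen:
  -- `b` at the successor of `γ` in `C j` separates them
  let C' : Set Ordinal.{0} := {γ | γ ∈ C j ∧ ∃ γ' ∈ C j, γ < γ'}
  have hstep : ∀ γ, ∃ i, γ ∈ C' → i ∈ I ∧ (∀ t ∈ T γ b j, f t i < f (x γ) i) ∧
      ∀ γ'' ∈ C', γ < γ'' → ∃ t ∈ T γ'' b j, f (x γ) i < f t i := by
    intro γ
    by_cases hγ : γ ∈ C'
    · obtain ⟨hγC, hγ'⟩ := hγ
      let N : Set Ordinal.{0} := {γ' | γ' ∈ C j ∧ γ < γ'}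
      have hN : sInf N ∈ N := csInf_mem (by obtain ⟨γ', h, h'⟩ := hγ'; exact ⟨γ', h, h'⟩)
      have hγL : γ < L := (hCμ γ hγC).trans hμL
      have hNL : sInf N < L := (hCμ _ hN.1).trans hμL
      have hdom : Dom (T γ b j) (σ (T γ b j)) := by
        refine hσ2 _ ⟨δ, hδL, 0, ?_, ?_⟩
        · exact (zero_le (a := μ.ord)).trans_lt (ord_lt_ord.2 hμl)
        · rintro i - hi hil _ ⟨k, ⟨hk, -⟩, rfl⟩
          refine (hf3 _ _ (hb3 k (hCμ k hk)) hδL ⟨k, hCμ k hk, (hCK hk).2.symm⟩ i hi hil).le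
      obtain ⟨-, i₀, hi₀, h0⟩ := hdom
      obtain ⟨i₁, hi₁, h1⟩ := hf2 _ _ ((hTx γ hγL).2 j hj) (hxL γ hγL)
      obtain ⟨i₂, hi₂, h2⟩ := hf2 _ _ (hxb _ _ hN.2 hNL) (hbL _ hNL)
      obtain ⟨i, hiI, hi⟩ := hI2 (max i₀ (max i₁ i₂)) (max_lt hi₀ (max_lt hi₁ hi₂))
      obtain ⟨hμi, hil⟩ := hI1 i hiI
      have hi0 : i₀ ≤ i := (le_max_left _ _).trans hi
      have hi1 : i₁ ≤ i := ((le_max_left _ _).trans (le_max_right _ _)).trans hi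
      have hi2 : i₂ ≤ i := ((le_max_right _ _).trans (le_max_right _ _)).trans hi
      refine ⟨i, fun _ => ⟨hiI, fun t ht => (h0 i hi0 hμi hil t ht).trans_lt (h1 i hi1 hμi hil),
        fun γ'' hγ'' hlt => ⟨b (sInf N), ⟨_, ⟨hN.1, ?_⟩, rfl⟩, h2 i hi2 hμi hil⟩⟩⟩
      exact csInf_le' ⟨hγ''.1, hlt⟩
    · exact ⟨0, fun h => absurd h hγ⟩
  choose ι hι using hstep
  have hinj : #C' ≤ #(I ×ˢ c : Set (Ordinal.{0} × Ordinal.{0})) := by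
    refine mk_le_of_injective (f := fun γ => ⟨(ι γ.1, f (x γ.1) (ι γ.1)), (hι γ.1 γ.2).1, ?_⟩) ?_
    · exact (hTx γ.1 ((hCμ _ γ.2.1).trans hμL)).1 ⟨_, (hι γ.1 γ.2).1, rfl⟩
    · have hne : ∀ γ γ', γ ∈ C' → γ' ∈ C' → γ < γ' → ι γ = ι γ' →
          f (x γ) (ι γ) ≠ f (x γ') (ι γ') := by
        intro γ γ' hγ hγ' hlt hii
        obtain ⟨t, ht, h⟩ := (hι γ hγ).2.2 γ' hγ' hlt
        have h' := (hι γ' hγ').2.1 t ht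
        rw [← hii] at h' ⊢
        exact (h.trans h').ne
      intro γ γ' h
      have h0 := congrArg Subtype.val h
      have h1 : ι γ.1 = ι γ'.1 := congrArg Prod.fst h0
      have h2 : f (x γ.1) (ι γ.1) = f (x γ'.1) (ι γ'.1) := congrArg Prod.snd h0
      rcases lt_trichotomy γ.1 γ'.1 with hlt | heq | hlt
      · exact absurd h2 (hne _ _ γ.2 γ'.2 hlt h1)
      · exact Subtype.ext heq
      · exact absurd h2.symm (hne _ _ γ'.2 γ.2 hlt h1.symm)
  have hκ1 : ℵ₀ ≤ Cardinal.lift.{1} κ := by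
    rw [← lift_aleph0.{1, 0}, lift_le]
    exact hκ0
  have hC'κ : #C' < Cardinal.lift.{1} κ := by
    refine hinj.trans_lt ?_
    rw [mk_setProd]
    exact mul_lt_of_lt hκ1 (hI3.trans_lt (lift_lt.2 hcf)) hcκ
  have hmax : #(C j \ C' : Set Ordinal.{0}) ≤ 1 := by
    rw [mk_le_one_iff_set_subsingleton]
    intro y hy z hz
    rcases lt_trichotomy y z with h | h | h
    · exact absurd ⟨hy.1, z, hz.1, h⟩ hy.2
    · exact h
    · exact absurd ⟨hz.1, y, hy.1, h⟩ hz.2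
  have hle : #(C j) ≤ #C' + 1 := by
    refine (mk_le_mk_of_subset (t := C' ∪ (C j \ C')) ?_).trans
      ((mk_union_le _ _).trans (add_le_add le_rfl hmax))
    intro y hy
    by_cases h : y ∈ C'
    · exact Or.inl h
    · exact Or.inr ⟨hy, h⟩
  exact (hCκ.trans hle).not_gt (add_lt_of_lt hκ1 hC'κ (one_lt_aleph0.trans_le hκ1))

/-! ### Transfer of piece selection -/

/-- Transfer of piece selection along a monotone map `φ : P_κ(λ) → μ` with cofinal range: partitions
of the intervals `[φ a, μ)` are pulled back along `φ`, with `{c | φ c < φ a}` as an additional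
piece. -/
lemma psPlusOne_of_tukey {τ κ lam μ : Cardinal.{0}} (hτ : ℵ₀ < τ)
    (hPS : PSPlus τ κ lam) (φ : Set Ordinal.{0} → Ordinal.{0})
    (hφμ : ∀ a ∈ Pkl κ lam, φ a < μ.ord)
    (hφm : ∀ a ∈ Pkl κ lam, ∀ b ∈ Pkl κ lam, a ⊆ b → φ a ≤ φ b)
    (hφc : ∀ γ < μ.ord, ∃ a ∈ Pkl κ lam, γ ≤ φ a) : PSPlusOne τ μ := by
  classical
  intro Q hQ
  let pull : Set Ordinal.{0} → Set (Set Ordinal.{0}) := fun A => {c | c ∈ Pkl κ lam ∧ φ c ∈ A}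
  let low : Set Ordinal.{0} → Set (Set Ordinal.{0}) := fun a => {c | c ∈ Pkl κ lam ∧ φ c < φ a}
  let Q' : Set Ordinal.{0} → Set (Set (Set Ordinal.{0})) := fun a =>
    {P | (P ∈ pull '' Q (φ a) ∨ P = low a) ∧ P.Nonempty}
  obtain ⟨B, ⟨hB, hBI⟩, h, hh, hint⟩ := hPS Q' (by
    intro a ha
    obtain ⟨⟨-, hsub, hdisj, hcov⟩, hcard⟩ := hQ (φ a) (hφμ a ha)
    refine ⟨⟨fun P hP => hP.2, ?_, ?_, ?_⟩, ?_⟩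
    · rintro _ ⟨⟨A, hA, rfl⟩ | rfl, -⟩
      · exact fun c hc => hc.1
      · exact fun c hc => hc.1
    · have hlow : ∀ A ∈ Q (φ a), ∀ c, c ∈ pull A → c ∉ low a :=
        fun A hA c hc hc' => (hsub A hA hc.2).1.not_gt hc'.2
      rintro _ ⟨⟨A, hA, rfl⟩ | rfl, -⟩ _ ⟨⟨A', hA', rfl⟩ | rfl, -⟩ hne
      · have hAA : A ≠ A' := fun h => hne (h ▸ rfl)
        refine Set.eq_empty_of_forall_notMem fun c hc => ?_
        have : φ c ∈ A ∩ A' := ⟨hc.1.2, hc.2.2⟩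
        rw [hdisj A hA A' hA' hAA] at this
        exact this
      · exact Set.eq_empty_of_forall_notMem fun c hc => hlow A hA c hc.1 hc.2
      · exact Set.eq_empty_of_forall_notMem fun c hc => hlow A' hA' c hc.2 hc.1
      · exact absurd rfl hne
    · apply Set.Subset.antisymm
      · rintro c ⟨_, ⟨⟨A, hA, rfl⟩ | rfl, -⟩, hc⟩
        · exact hc.1
        · exact hc.1
      · intro c hc
        by_cases hlt : φ c < φ a
        · exact ⟨low a, ⟨Or.inr rfl, c, hc, hlt⟩, hc, hlt⟩
        · have : φ c ∈ ⋃₀ Q (φ a) := by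
            rw [hcov]
            exact ⟨not_lt.1 hlt, hφμ c hc⟩
          obtain ⟨A, hA, hcA⟩ := this
          exact ⟨pull A, ⟨Or.inl ⟨A, hA, rfl⟩, c, hc, hcA⟩, hc, hcA⟩
    · have hτ1 : ℵ₀ < Cardinal.lift.{1} τ := by
        rw [← lift_aleph0.{1, 0}, lift_lt]
        exact hτ
      refine (mk_le_mk_of_subset (t := pull '' Q (φ a) ∪ {low a}) ?_).trans_lt ?_
      · rintro P ⟨h | h, -⟩
        · exact Or.inl h
        · exact Or.inr h
      · refine (mk_union_le _ _).trans_lt (add_lt_of_lt hτ1.le (mk_image_le.trans_lt hcard) ?_)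
        rw [mk_singleton]
        exact one_lt_aleph0.trans hτ1)
  -- the piece selected at a member of `B` contains a superset of it, so is not the low piece
  have hpiece : ∀ a ∈ B, ∃ A ∈ Q (φ a), pull A = h a := by
    intro a ha
    obtain ⟨c, hc, -, hac⟩ := hint a ha a ha
    obtain ⟨⟨A, hA, hPA⟩ | hlow, -⟩ := hh a (hB ha)
    · exact ⟨A, hA, hPA⟩
    · rw [hlow] at hc
      exact absurd hc.2 (hφm a (hB ha) c hc.1 (Set.subset_union_left.trans hac)).not_gt
  have hsel : ∀ β, ∃ a, β ∈ φ '' B → a ∈ B ∧ φ a = β := by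
    intro β
    by_cases hβ : β ∈ φ '' B
    · obtain ⟨a, ha, h⟩ := hβ
      exact ⟨a, fun _ => ⟨ha, h⟩⟩
    · exact ⟨∅, fun h => absurd h hβ⟩
  choose s hs using hsel
  have hA : ∀ β, ∃ A, β ∈ φ '' B → A ∈ Q β ∧ pull A = h (s β) := by
    intro β
    by_cases hβ : β ∈ φ '' B
    · obtain ⟨A, hA, hA'⟩ := hpiece (s β) (hs β hβ).1
      rw [(hs β hβ).2] at hA
      exact ⟨A, fun _ => ⟨hA, hA'⟩⟩
    · exact ⟨∅, fun h => absurd h hβ⟩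
  choose h' hh' using hA
  refine ⟨φ '' B, ?_, ?_, h', fun β hβ => (hh' β hβ).1, ?_⟩
  · rintro _ ⟨a, ha, rfl⟩
    exact hφμ a (hB ha)
  · intro γ hγ
    obtain ⟨a, ha, hγa⟩ := hφc γ hγ
    have : ∃ b ∈ B, a ⊆ b := by
      by_contra! hcon
      exact hBI ⟨hB, a, ha, hcon⟩
    obtain ⟨b, hb, hab⟩ := this
    exact ⟨φ b, ⟨b, hb, rfl⟩, hγa.trans (hφm a ha b (hB hb) hab)⟩
  · intro α hα β hβ
    obtain ⟨c, hc1, hc2, -⟩ := hint _ (hs α hα).1 _ (hs β hβ).1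
    rw [← (hh' α hα).2] at hc1
    rw [← (hh' β hβ).2] at hc2
    exact ⟨φ c, hc1.2, hc2.2⟩

/-- if `λ > κ`, `cf(λ) < κ` and `PS⁺((cf λ)⁺, κ, λ)` holds, then
`PS⁺((cf λ)⁺, λ⁺)` holds. -/
theorem stmt5 (κ lam : Cardinal.{0}) (hreg : κ.IsRegular) (hunc : ℵ₀ < κ)
    (hkl : κ < lam) (hcf : lam.ord.cof < κ)
    (hPS : PSPlus (Order.succ lam.ord.cof) κ lam) :
    PSPlusOne (Order.succ lam.ord.cof) (Order.succ lam) := by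
  have hκ0 : ℵ₀ ≤ κ := hunc.le
  have hlam0 : ℵ₀ ≤ lam := hκ0.trans hkl.le
  -- `λ` is singular, so it is neither `κ⁺` nor `κ⁺⁺`
  have hne : ∀ c : Cardinal.{0}, κ ≤ c → c < lam → Order.succ c < lam := by
    intro c hc hcl
    refine lt_of_le_of_ne (Order.succ_le_of_lt hcl) fun h => ?_
    have hr : (Order.succ c).IsRegular := isRegular_succ (hκ0.trans hc)
    have := hr.cof_ord
    rw [h] at this
    exact (hcf.trans hkl).ne this
  have hκν : κ < Order.succ κ := Order.lt_succ κ
  obtain ⟨a, ha, hbd⟩ := exists_tukey hreg (hne _ hκν.le (hne κ le_rfl hkl)) hcf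
  set L := (Order.succ lam).ord with hL
  let U : Set Ordinal.{0} → Set Ordinal.{0} := fun c => {γ | ∀ α < L, a α ⊆ c → α < γ}
  have hUne : ∀ c ∈ Pkl κ lam, (U c).Nonempty := by
    intro c hc
    obtain ⟨γ, -, h⟩ := hbd c hc
    exact ⟨γ, h⟩
  refine psPlusOne_of_tukey ?_ hPS (fun c => sInf (U c)) ?_ ?_ ?_
  · refine lt_of_le_of_lt ?_ (Order.lt_succ _)
    exact Ordinal.aleph0_le_cof_iff.2 (Ordinal.one_lt_cof_iff.2 (isSuccLimit_ord hlam0))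
  · intro c hc
    obtain ⟨γ, hγ, h⟩ := hbd c hc
    exact (csInf_le' (show γ ∈ U c from h)).trans_lt hγ
  · intro b hb c hc hbc
    exact csInf_le' fun α hα h => csInf_mem (hUne c hc) α hα (h.trans hbc)
  · intro γ hγ
    exact ⟨a γ, ha γ hγ, (csInf_mem (hUne _ (ha γ hγ)) γ hγ subset_rfl).le⟩
end
end

section
/- Let χ be a singular cardinal such that PS^+((cf(χ))^+, χ^+) holds. Then ADS_χ fails: there is no family (y_α)_{α<χ^+} of cofinal subsets of χ of order type cf(χ) such that for each nonzero β < χ^+ there is k ∈ ∏_{α<β} y_α with (y_δ \ k(δ)) ∩ (y_α \ k(α)) = ∅ whenever δ < α < β. -/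
/-!
The idea: for `γ < χ⁺` let `K γ` be a function disjointifying the sets `y α` with `α ≤ γ`, and
for each `β` partition `[β, χ⁺)` according to the value of `K γ β`, which lies in `y β`. This
partition has at most `cf χ` pieces, so piece selection gives a cofinal `B ⊆ χ⁺` and values
`g β ∈ y β` such that for all `α, β ∈ B` a single `γ ≥ α, β` satisfies `K γ α = g α` and
`K γ β = g β`. The tails of `y α` and `y β` from `g α` and `g β` are then disjoint, whence
`g α ≠ g β`. So `g` injects a cofinal subset of `χ⁺` into `χ`, against the regularity of `χ⁺`
(`no_injOn_of_cofinal_succ`).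
-/

set_option autoImplicit false

noncomputable section

open Cardinal Set

universe u

/-- A cofinal subset of `χ⁺` cannot be injected into `χ`, since `χ⁺` is regular. -/
theorem no_injOn_of_cofinal_succ (χ : Cardinal.{0}) (hinf : ℵ₀ ≤ χ) (B : Set Ordinal.{0})
    (hB : B ⊆ Set.Iio (Order.succ χ).ord)
    (hcof : ∀ γ < (Order.succ χ).ord, ∃ β ∈ B, γ ≤ β)
    (g : Ordinal.{0} → Ordinal.{0}) (hg : ∀ β ∈ B, g β < χ.ord) (hinj : Set.InjOn g B) :
    False := by
  have hlim := Cardinal.isSuccLimit_ord (hinf.trans (Order.le_succ χ))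
  have hreg : (Order.succ χ).ord.cof = Order.succ χ :=
    (Cardinal.isRegular_succ hinf).cof_ord
  -- The successor of the `B`-preimage of each ordinal below `χ`, and `0` where there is none.
  have hf : ∀ i : χ.ord.ToType, ∃ x < (Order.succ χ).ord,
      ∀ β ∈ B, g β = Ordinal.typein (α := χ.ord.ToType) (· < ·) i → x = Order.succ β := by
    intro i
    by_cases h : ∃ β ∈ B, g β = Ordinal.typein (α := χ.ord.ToType) (· < ·) i
    · obtain ⟨β, hβ, e⟩ := h
      refine ⟨Order.succ β, hlim.succ_lt (hB hβ), fun β' hβ' e' => ?_⟩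
      rw [hinj hβ' hβ (e'.trans e.symm)]
    · exact ⟨0, hlim.bot_lt, fun β hβ e => (h ⟨β, hβ, e⟩).elim⟩
  choose f hflt hf using hf
  have hsup : iSup f < (Order.succ χ).ord := by
    refine Ordinal.iSup_lt_of_lt_cof ?_ hflt
    rw [hreg]
    simp
  obtain ⟨β, hβ, hle⟩ := hcof _ hsup
  have hlt : g β < Ordinal.type (α := χ.ord.ToType) (· < ·) := by
    simpa using hg β hβ
  have h1 := hf (Ordinal.enum (α := χ.ord.ToType) (· < ·) ⟨g β, hlt⟩) β hβ (by simp)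
  have h2 := Ordinal.le_iSup f (Ordinal.enum (α := χ.ord.ToType) (· < ·) ⟨g β, hlt⟩)
  rw [h1] at h2
  exact (Order.lt_succ_of_not_isMax (not_isMax β)).not_ge (h2.trans hle)

/-- if `χ` is singular and `PS⁺((cf χ)⁺, χ⁺)` holds, then the
almost disjoint set principle `ADS_χ` fails. -/
theorem stmt6 (χ : Cardinal.{0}) (hinf : ℵ₀ ≤ χ) (hsing : χ.ord.cof < χ)
    (hPS : PSPlusOne (Order.succ χ.ord.cof) (Order.succ χ)) :
    ¬∃ y : Ordinal.{0} → Set Ordinal.{0},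
      (∀ α, α < (Order.succ χ).ord →
        ((∃ e : Ordinal.{0} → Ordinal.{0},
            (∀ i j, i < j → j < (χ.ord.cof).ord → e i < e j) ∧
            (∀ i, i < (χ.ord.cof).ord → e i < χ.ord) ∧
            y α = e '' Set.Iio (χ.ord.cof).ord) ∧
          ∀ γ, γ < χ.ord → ∃ ξ ∈ y α, γ ≤ ξ)) ∧
      ∀ β, 0 < β → β < (Order.succ χ).ord →
        ∃ k : Ordinal.{0} → Ordinal.{0}, (∀ α, α < β → k α ∈ y α) ∧
          ∀ δ α, δ < α → α < β →
            {ξ | ξ ∈ y δ ∧ k δ ≤ ξ} ∩ {ξ | ξ ∈ y α ∧ k α ≤ ξ} = ∅ := by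
  rintro ⟨y, hy, hk⟩
  have hlim := Cardinal.isSuccLimit_ord (hinf.trans (Order.le_succ χ))
  -- `K γ` disjointifies the sets `y α` for `α ≤ γ`.
  have hK : ∀ γ, ∃ k : Ordinal.{0} → Ordinal.{0}, γ < (Order.succ χ).ord →
      (∀ α ≤ γ, k α ∈ y α) ∧ ∀ δ α, δ < α → α ≤ γ →
        {ξ | ξ ∈ y δ ∧ k δ ≤ ξ} ∩ {ξ | ξ ∈ y α ∧ k α ≤ ξ} = ∅ := by
    intro γ
    by_cases hγ : γ < (Order.succ χ).ord
    · obtain ⟨k, h1, h2⟩ := hk (Order.succ γ) (by simp) (hlim.succ_lt hγ)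
      exact ⟨k, fun _ => ⟨fun α h => h1 α (Order.lt_succ_of_le h),
        fun δ α h h' => h2 δ α h (Order.lt_succ_of_le h')⟩⟩
    · exact ⟨id, fun h => (hγ h).elim⟩
  choose K hK using hK
  -- `P β ξ` is the piece of `[β, χ⁺)` on which `K γ β` takes the value `ξ`.
  let P : Ordinal.{0} → Ordinal.{0} → Set Ordinal.{0} :=
    fun β ξ => {γ | γ ∈ Set.Ico β (Order.succ χ).ord ∧ K γ β = ξ}
  obtain ⟨B, hB, hcof, h, hh, hint⟩ := hPS (fun β => P β '' {ξ | ξ ∈ y β ∧ (P β ξ).Nonempty}) (by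
    intro β hβ
    refine ⟨⟨?_, ?_, ?_, ?_⟩, ?_⟩
    · rintro _ ⟨ξ, hξ, rfl⟩
      exact hξ.2
    · rintro _ ⟨ξ, hξ, rfl⟩ γ hγ
      exact hγ.1
    · rintro _ ⟨ξ, hξ, rfl⟩ _ ⟨ξ', hξ', rfl⟩ hne
      rw [Set.eq_empty_iff_forall_notMem]
      rintro γ ⟨h1, h2⟩
      exact hne (by rw [← h1.2, ← h2.2])
    · ext γ
      constructor
      · rintro ⟨_, ⟨ξ, hξ, rfl⟩, hγ⟩
        exact hγ.1
      · intro hγ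
        exact ⟨P β (K γ β), ⟨K γ β, ⟨(hK γ hγ.2).1 β hγ.1, γ, hγ, rfl⟩, rfl⟩, hγ, rfl⟩
    · obtain ⟨⟨e, -, -, he⟩, -⟩ := hy β hβ
      have h1 : #(P β '' {ξ | ξ ∈ y β ∧ (P β ξ).Nonempty} : Set (Set Ordinal.{0})) ≤
          Cardinal.lift.{1} χ.ord.cof := by
        refine Cardinal.mk_image_le.trans ?_
        refine (Cardinal.mk_le_mk_of_subset (fun ξ hξ => hξ.1 : _ ⊆ y β)).trans ?_
        rw [he]
        refine Cardinal.mk_image_le.trans ?_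
        rw [Cardinal.mk_Iio_ordinal, Cardinal.card_ord]
      exact h1.trans_lt (Cardinal.lift_lt.2 (Order.lt_succ _)))
  have hg : ∀ β, ∃ ξ, β ∈ B → ξ ∈ y β ∧ P β ξ = h β := by
    intro β
    by_cases hβ : β ∈ B
    · obtain ⟨ξ, hξ, e⟩ := hh β hβ
      exact ⟨ξ, fun _ => ⟨hξ.1, e⟩⟩
    · exact ⟨0, fun h => (hβ h).elim⟩
  choose g hg using hg
  -- Equal values `g α = g β` would be a common point of the two disjoint tails.
  have key : ∀ α ∈ B, ∀ β ∈ B, α < β → g α ≠ g β := by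
    intro α hα β hβ hlt heq
    obtain ⟨γ, hγα, hγβ⟩ := hint α hα β hβ
    rw [← (hg α hα).2] at hγα
    rw [← (hg β hβ).2] at hγβ
    have hd := (hK γ hγα.1.2).2 α β hlt hγβ.1.1
    rw [hγα.2, hγβ.2] at hd
    exact Set.eq_empty_iff_forall_notMem.1 hd (g α)
      ⟨⟨(hg α hα).1, le_rfl⟩, heq ▸ (hg β hβ).1, heq.ge⟩
  refine no_injOn_of_cofinal_succ χ hinf B hB hcof g (fun β hβ => ?_) (fun α hα β hβ e => ?_)
  · obtain ⟨⟨e, -, hlt, he⟩, -⟩ := hy β (hB hβ)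
    have hm := (hg β hβ).1
    rw [he] at hm
    obtain ⟨i, hi, e'⟩ := hm
    exact e' ▸ hlt i hi
  · rcases lt_trichotomy α β with hl | hl | hl
    · exact (key α hα β hβ hl e).elim
    · exact hl
    · exact (key β hβ α hα hl e.symm).elim
end
end
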